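/- arXiv:1708.09512 — 2 statements merged into one kernel-verified Lean document; each statement's English description precedes it below -/
import Mathlib

section
/- Under the hypotheses of the previous setting (f(x) = g(x)·1{φ(x) ≥ 0} with g, φ ∈ C^r(ℝ^d), Assumptions 1, 2, 3 holding with constants B_1,…,B_d ∈ (0,1), B > 0, and fixed j), with in addition r ≥ d−1 and B_j < 1/(2d−1), the function q_j(u_{-j}) := (P_j f)(Φ⁻¹(u_{-j})) (where Φ⁻¹ is applied componentwise) defined on (0,1)^{d-1} satisfies the boundary growth condition: there exists a constant C < ∞ such that for every subset v ⊆ {1,…,d}\{j}, |(D_v q_j)(u_{-j})| ≤ C·∏_{i ∈ v} min(u_i, 1−u_i)^{−(2d−1)B_i − 1 − B}·∏_{i ∈ ({1,…,d}\{j})\v} min(u_i, 1−u_i)^{−(2d−1)B_i} for all u_{-j} ∈ (0,1)^{d-1}. -/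
/-!
Write `x = (t, y)` with `t = x_j`.  Since `D_jφ` never vanishes it has a constant sign, so
`t ↦ φ (t, y)` is strictly monotone and has at most one zero `ψ y`.  Hence `P_j f` is the integral of
`g ρ` over a half-line ending at `ψ y` (or over all or none of `ℝ`), and differentiating in `y_m`
gives the volume integral of `D_m g` plus a boundary term `± g ρ D_mφ / D_jφ` evaluated at
`(ψ y, y)`.  Boundary terms `H (ψ y, y)` are differentiated by the implicit function theorem, which
replaces `H` by `D_m H - D_j H · D_mφ / D_jφ` (`tang`).

The set of `y` for which `ψ y` exists (`zeroDom`) is open but need not be everything.  At a point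
outside it, `ψ` escapes to infinity, so the tail conditions on `ρ` make the boundary terms and
their derivatives tend to zero, and extending them by zero gives functions that are differentiable
everywhere (`bd_hasFDerivAt`, `vol_hasFDerivAt`, via `hasFDerivAt_zero_of_vanish`).

After `n` differentiations the boundary term is a sum of expressions
`A · (D_jφ)^{-b} · ρ^{(c)}(x_j)` with `A` of degree at most `2n` in derivatives of `g` and `φ`,
`b ≤ 2n - 1` and `c ≤ n - 1` (`BdCls`).  The growth assumptions bound it by the weight
`∏ min(Φ(x_i), 1 - Φ(x_i))^{-B_i}` to the power `2n + 1 ≤ 2d - 1` times `|ρ^{(c)}(x_j)|`; because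
`(2d - 1) B_j < 1`, the factor in `x_j` is bounded and vanishes at infinity
(`GrowthData.iterated_bound`).  Finally the substitution `y = Φ⁻¹(u)` multiplies a mixed derivative
by one factor `1 / ρ(Φ⁻¹(u_i))` for each differentiated coordinate (`foldr_pD_comp`), and these are
controlled by the quantile bound.
-/

open MeasureTheory Set Filter

/-- Partial derivative of `g` with respect to the `i`-th coordinate. -/
noncomputable def pD {ι : Type} [Fintype ι] [DecidableEq ι] (i : ι)
    (g : (ι → ℝ) → ℝ) : (ι → ℝ) → ℝ :=
  fun x => fderiv ℝ g x (Pi.single i 1)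

/-- Mixed partial derivative `D^α g` for a multi-index `α`. -/
noncomputable def mD {ι : Type} [Fintype ι] [DecidableEq ι] (α : ι → ℕ)
    (g : (ι → ℝ) → ℝ) : (ι → ℝ) → ℝ :=
  (((Finset.univ : Finset ι).toList).flatMap (fun i => List.replicate (α i) i)).foldr pD g

/-- Insert the value `t` at coordinate `j`, the remaining coordinates given by `y`. -/
def insj {d : ℕ} (j : Fin d) (t : ℝ) (y : {i : Fin d // i ≠ j} → ℝ) : Fin d → ℝ :=
  fun i => if h : i = j then t else y ⟨i, h⟩

/-- `(P_j f)(x_{-j}) = ∫ f(x_j, x_{-j}) ρ(x_j) dx_j`. -/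
noncomputable def Pj {d : ℕ} (j : Fin d) (ρ : ℝ → ℝ) (f : (Fin d → ℝ) → ℝ) :
    ({i : Fin d // i ≠ j} → ℝ) → ℝ :=
  fun y => ∫ t : ℝ, f (insj j t y) * ρ t

/-- The CDF `Φ(x) = ∫_{-∞}^x ρ(t) dt` of the density `ρ`. -/
noncomputable def cdf (ρ : ℝ → ℝ) : ℝ → ℝ := fun x => ∫ t in Iic x, ρ t

open Topology

/-! ### Gradients and insertion of a coordinate -/

/-- The linear form on `ℝ^ι` with coefficients `c`; it encodes gradients. -/
noncomputable def gradL {ι : Type} [Fintype ι] (c : ι → ℝ) : (ι → ℝ) →L[ℝ] ℝ :=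
  ∑ k, c k • ContinuousLinearMap.proj (R := ℝ) (φ := fun _ : ι => ℝ) k

lemma gradL_apply {ι : Type} [Fintype ι] (c z : ι → ℝ) : gradL c z = ∑ k, c k * z k := by
  simp [gradL]

lemma gradL_single {ι : Type} [Fintype ι] [DecidableEq ι] (c : ι → ℝ) (k : ι) :
    gradL c (Pi.single k 1) = c k := by
  simp [gradL_apply, Pi.single_apply]

lemma norm_gradL_le {ι : Type} [Fintype ι] (c : ι → ℝ) : ‖gradL c‖ ≤ ∑ k, |c k| := by
  refine ContinuousLinearMap.opNorm_le_bound _ (Finset.sum_nonneg fun _ _ => abs_nonneg _) ?_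
  intro z
  rw [gradL_apply, Finset.sum_mul]
  refine (norm_sum_le _ _).trans (Finset.sum_le_sum fun k _ => ?_)
  rw [norm_mul, Real.norm_eq_abs]
  exact mul_le_mul_of_nonneg_left (norm_le_pi_norm z k) (abs_nonneg _)

lemma clm_eq_gradL {ι : Type} [Fintype ι] [DecidableEq ι] (A : (ι → ℝ) →L[ℝ] ℝ) :
    A = gradL (fun k => A (Pi.single k 1)) := by
  ext z
  rw [gradL_apply]
  conv_lhs => rw [← Finset.univ_sum_single z]
  rw [map_sum]
  refine Finset.sum_congr rfl fun k _ => ?_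
  have : Pi.single (M := fun _ : ι => ℝ) k (z k) = z k • Pi.single k 1 := by
    rw [← Pi.single_smul]; simp
  rw [this, map_smul, smul_eq_mul, mul_comm]

lemma HasFDerivAt.to_gradL {ι : Type} [Fintype ι] [DecidableEq ι] {h : (ι → ℝ) → ℝ}
    {A : (ι → ℝ) →L[ℝ] ℝ} {c : ι → ℝ} {y : ι → ℝ} (hh : HasFDerivAt h A y)
    (hc : ∀ k, A (Pi.single k 1) = c k) : HasFDerivAt h (gradL c) y := by
  have : A = gradL c := (clm_eq_gradL A).trans (congrArg gradL (funext hc))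
  exact this ▸ hh

lemma HasFDerivAt.pD_eq {ι : Type} [Fintype ι] [DecidableEq ι] {h : (ι → ℝ) → ℝ} {c : ι → ℝ}
    {y : ι → ℝ} (hh : HasFDerivAt h (gradL c) y) (k : ι) : pD k h y = c k := by
  rw [pD, hh.fderiv, gradL_single]

/-- `insj` as a continuous linear map of the pair of its arguments. -/
noncomputable def insL {d : ℕ} (j : Fin d) : (({i : Fin d // i ≠ j} → ℝ) × ℝ) →L[ℝ] (Fin d → ℝ) :=
  ContinuousLinearMap.pi fun i =>
    if h : i = j then ContinuousLinearMap.snd ℝ ({i : Fin d // i ≠ j} → ℝ) ℝ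
    else (ContinuousLinearMap.proj (R := ℝ) (φ := fun _ : {i : Fin d // i ≠ j} => ℝ) ⟨i, h⟩).comp
      (ContinuousLinearMap.fst ℝ ({i : Fin d // i ≠ j} → ℝ) ℝ)

lemma insL_apply {d : ℕ} (j : Fin d) (y : {i : Fin d // i ≠ j} → ℝ) (t : ℝ) :
    insL j (y, t) = insj j t y := by
  ext i
  by_cases h : i = j <;> simp [insL, insj, h]

lemma insj_self {d : ℕ} (j : Fin d) (t : ℝ) (y : {i : Fin d // i ≠ j} → ℝ) :
    insj j t y j = t := by simp [insj]

lemma insj_val {d : ℕ} (j : Fin d) (t : ℝ) (y : {i : Fin d // i ≠ j} → ℝ)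
    (k : {i : Fin d // i ≠ j}) : insj j t y k.1 = y k := by simp [insj, k.2]

lemma insj_single {d : ℕ} (j : Fin d) (k : {i : Fin d // i ≠ j}) :
    insj j 0 (Pi.single k 1) = Pi.single k.1 1 := by
  ext i
  by_cases h : i = j
  · subst h; simp [insj, k.2.symm]
  · by_cases h2 : i = k.1
    · subst h2; simp [insj, k.2]
    · have : (⟨i, h⟩ : {i : Fin d // i ≠ j}) ≠ k := fun hh => h2 (by rw [← hh])
      simp [insj, h, h2, this]

lemma insj_one {d : ℕ} (j : Fin d) : insj j 1 0 = Pi.single j 1 := by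
  ext i
  by_cases h : i = j
  · subst h; simp [insj]
  · simp [insj, h]

lemma continuous_insj {d : ℕ} (j : Fin d) :
    Continuous fun p : ({i : Fin d // i ≠ j} → ℝ) × ℝ => insj j p.2 p.1 := by
  have := (insL j).continuous
  simpa [← insL_apply] using this

lemma continuous_insj_left {d : ℕ} (j : Fin d) (y : {i : Fin d // i ≠ j} → ℝ) :
    Continuous fun t : ℝ => insj j t y :=
  (continuous_insj j).comp (Continuous.prodMk_right y)

lemma continuous_insj_right {d : ℕ} (j : Fin d) (t : ℝ) :
    Continuous fun y : {i : Fin d // i ≠ j} → ℝ => insj j t y :=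
  (continuous_insj j).comp (Continuous.prodMk_left t)

/-- Chain rule for `y ↦ H (ψ y, y)`. -/
lemma hasFDerivAt_comp_insj {d : ℕ} {j : Fin d} {H : (Fin d → ℝ) → ℝ}
    {ψ : ({i : Fin d // i ≠ j} → ℝ) → ℝ} {c : {i : Fin d // i ≠ j} → ℝ}
    {y : {i : Fin d // i ≠ j} → ℝ} (hψ : HasFDerivAt ψ (gradL c) y)
    (hH : DifferentiableAt ℝ H (insj j (ψ y) y)) :
    HasFDerivAt (fun y => H (insj j (ψ y) y))
      (gradL fun k => pD k.1 H (insj j (ψ y) y) + c k * pD j H (insj j (ψ y) y)) y := by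
  have h1 : HasFDerivAt (fun y => insj j (ψ y) y)
      ((insL j).comp ((ContinuousLinearMap.id ℝ _).prod (gradL c))) y := by
    have := (insL j).hasFDerivAt.comp y ((hasFDerivAt_id y).prodMk hψ)
    refine this.congr_of_eventuallyEq (Eventually.of_forall fun z => ?_)
    simp [insL_apply]
  have h2 := HasFDerivAt.comp (g := H) (f := fun y => insj j (ψ y) y) y hH.hasFDerivAt h1
  refine HasFDerivAt.to_gradL h2 fun k => ?_
  have : insj j (c k) (Pi.single k 1) = Pi.single k.1 1 + c k • Pi.single j 1 := by
    rw [← insj_single, ← insj_one]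
    ext i
    by_cases h : i = j <;> simp [insj, h]
  simp [insL_apply, gradL_single, pD, this]

lemma hasDerivAt_insj {d : ℕ} {j : Fin d} {H : (Fin d → ℝ) → ℝ}
    {y : {i : Fin d // i ≠ j} → ℝ} {t : ℝ}
    (hH : DifferentiableAt ℝ H (insj j t y)) :
    HasDerivAt (fun t => H (insj j t y)) (pD j H (insj j t y)) t := by
  have h1 : HasDerivAt (fun t => insj j t y) (insj j 1 0) t := by
    rw [hasDerivAt_pi]
    intro i
    by_cases h : i = j
    · simp only [insj, h, dite_true]; exact hasDerivAt_id t
    · simp only [insj, h, dite_false]; exact hasDerivAt_const t _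
  have := hH.hasFDerivAt.comp_hasDerivAt t h1
  rw [insj_one] at this
  exact this

/-- A function vanishing off `U` whose gradient on `U` tends to zero at `y₀ ∉ U` has zero derivative
at `y₀`: on a segment from `y₀` apply the mean value theorem after its last point outside `U`. -/
lemma hasFDerivAt_zero_of_vanish {E : Type*} [NormedAddCommGroup E] [NormedSpace ℝ E]
    {h : E → ℝ} {h' : E → E →L[ℝ] ℝ} {U : Set E} (hU : IsOpen U) {y₀ : E} (hy₀ : y₀ ∉ U)
    {V : Set E} (hV : V ∈ 𝓝 y₀)
    (hz : ∀ y ∈ V, y ∉ U → h y = 0) (hc : ContinuousOn h V)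
    (hd : ∀ y ∈ V, y ∈ U → HasFDerivAt h (h' y) y)
    (hlim : ∀ ε > 0, ∀ᶠ y in 𝓝 y₀, y ∈ U → ‖h' y‖ ≤ ε) :
    HasFDerivAt h (0 : E →L[ℝ] ℝ) y₀ := by
  have h0 : h y₀ = 0 := hz _ (mem_of_mem_nhds hV) hy₀
  rw [hasFDerivAt_iff_isLittleO, Asymptotics.isLittleO_iff]
  intro ε hε
  obtain ⟨δ, hδ, hball⟩ := Metric.mem_nhds_iff.1 (Filter.inter_mem hV (hlim ε hε))
  filter_upwards [Metric.ball_mem_nhds y₀ hδ] with y hy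
  simp only [h0, sub_zero, _root_.zero_apply]
  by_cases hyU : y ∈ U
  swap
  · rw [hz y (hball hy).1 hyU, norm_zero]; positivity
  let γ : ℝ → E := fun s => y₀ + s • (y - y₀)
  have hγc : Continuous γ := by fun_prop
  have hγb : ∀ s ∈ Icc (0 : ℝ) 1, γ s ∈ Metric.ball y₀ δ := by
    intro s hs
    have : ‖s • (y - y₀)‖ < δ := by
      rw [norm_smul, Real.norm_eq_abs, abs_of_nonneg hs.1]
      have h1 : ‖y - y₀‖ < δ := by simpa [dist_eq_norm] using hy
      nlinarith [hs.1, hs.2, norm_nonneg (y - y₀)]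
    simpa [γ, dist_eq_norm] using this
  let S : Set ℝ := Icc 0 1 ∩ γ ⁻¹' Uᶜ
  have hSc : IsCompact S := isCompact_Icc.inter_right (hU.isClosed_compl.preimage hγc)
  have hSn : S.Nonempty := ⟨0, by simp, by simpa [γ] using hy₀⟩
  have hsS := hSc.sSup_mem hSn
  set σ := sSup S with hσ
  have hγ1 : γ 1 = y := by simp [γ]
  have hσ1 : σ < 1 := by
    refine lt_of_le_of_ne hsS.1.2 fun hh => ?_
    have := hsS.2
    rw [hh] at this
    exact this (by rw [hγ1]; exact hyU)
  have hin : ∀ s ∈ Ioc σ 1, γ s ∈ U := by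
    intro s hs
    by_contra hcon
    have : s ≤ σ := le_csSup hSc.bddAbove ⟨⟨hsS.1.1.trans hs.1.le, hs.2⟩, hcon⟩
    exact absurd hs.1 (not_lt.2 this)
  have hIcc : ∀ s ∈ Icc σ 1, s ∈ Icc (0 : ℝ) 1 := fun s hs => ⟨hsS.1.1.trans hs.1, hs.2⟩
  obtain ⟨ξ, hξ, hξe⟩ := exists_hasDerivAt_eq_slope (fun s => h (γ s))
    (fun s => h' (γ s) (y - y₀)) hσ1
    (hc.comp hγc.continuousOn fun s hs => (hball (hγb s (hIcc s hs))).1)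
    (fun s hs => by
      have hγd : HasDerivAt γ (y - y₀) s := by
        have := ((hasDerivAt_id s).smul_const (y - y₀)).const_add y₀
        simpa [γ] using this
      exact (hd (γ s) (hball (hγb s (hIcc s ⟨hs.1.le, hs.2.le⟩))).1
        (hin s ⟨hs.1, hs.2.le⟩)).comp_hasDerivAt s hγd)
  have hzσ : h (γ σ) = 0 := hz _ (hball (hγb σ hsS.1)).1 hsS.2
  simp only [hzσ, hγ1, sub_zero] at hξe
  have hne : (1 - σ) ≠ 0 := by linarith
  have hhy : h y = h' (γ ξ) (y - y₀) * (1 - σ) := by rw [hξe]; field_simp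
  have hξI : ξ ∈ Icc (0 : ℝ) 1 := hIcc ξ ⟨hξ.1.le, hξ.2.le⟩
  have hb : ‖h' (γ ξ)‖ ≤ ε := (hball (hγb ξ hξI)).2 (hin ξ ⟨hξ.1, hξ.2.le⟩)
  rw [hhy, norm_mul]
  have h1 : ‖h' (γ ξ) (y - y₀)‖ ≤ ε * ‖y - y₀‖ :=
    (ContinuousLinearMap.le_opNorm _ _).trans (mul_le_mul_of_nonneg_right hb (norm_nonneg _))
  have h2 : ‖1 - σ‖ ≤ 1 := by
    rw [Real.norm_eq_abs, abs_of_nonneg (by linarith)]; linarith [hsS.1.1]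
  calc _ ≤ ‖h' (γ ξ) (y - y₀)‖ * 1 := mul_le_mul_of_nonneg_left h2 (norm_nonneg _)
    _ ≤ _ := by simpa using h1

/-! ### The zero of `φ` in the `j`-th variable and boundary terms -/

section ZeroSet

variable {d : ℕ} {j : Fin d} {φ : (Fin d → ℝ) → ℝ}

/-- The points `y` for which `t ↦ φ (t, y)` has a zero. -/
def zeroDom (j : Fin d) (φ : (Fin d → ℝ) → ℝ) : Set ({i : Fin d // i ≠ j} → ℝ) :=
  {y | ∃ t, φ (insj j t y) = 0}

open Classical in
/-- The zero `ψ y` of `t ↦ φ (t, y)`, with value `0` where there is none. -/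
noncomputable def zeroAt (j : Fin d) (φ : (Fin d → ℝ) → ℝ) (y : {i : Fin d // i ≠ j} → ℝ) : ℝ :=
  if h : ∃ t, φ (insj j t y) = 0 then h.choose else 0

open Classical in
/-- The boundary functional `y ↦ H (ψ y, y)`, extended by zero to all `y`. -/
noncomputable def bd (j : Fin d) (φ H : (Fin d → ℝ) → ℝ) (y : {i : Fin d // i ≠ j} → ℝ) : ℝ :=
  if y ∈ zeroDom j φ then H (insj j (zeroAt j φ y) y) else 0

/-- The derivative in direction `k` of `H` along the hypersurface `φ = 0` parametrized by `y`. -/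
noncomputable def tang (j : Fin d) (φ : (Fin d → ℝ) → ℝ) (k : Fin d) (H : (Fin d → ℝ) → ℝ) :
    (Fin d → ℝ) → ℝ :=
  fun x => pD k H x - pD j H x * (pD k φ x * (pD j φ x)⁻¹)

lemma zeroAt_spec {y : {i : Fin d // i ≠ j} → ℝ} (h : y ∈ zeroDom j φ) :
    φ (insj j (zeroAt j φ y) y) = 0 := by
  have h' : ∃ t, φ (insj j t y) = 0 := h
  rw [zeroAt, dif_pos h']; exact h'.choose_spec

lemma bd_of_mem {H : (Fin d → ℝ) → ℝ} {y : {i : Fin d // i ≠ j} → ℝ} (h : y ∈ zeroDom j φ) :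
    bd j φ H y = H (insj j (zeroAt j φ y) y) := by rw [bd, if_pos h]

lemma bd_of_notMem {H : (Fin d → ℝ) → ℝ} {y : {i : Fin d // i ≠ j} → ℝ} (h : y ∉ zeroDom j φ) :
    bd j φ H y = 0 := by rw [bd, if_neg h]

lemma continuous_pD {ι : Type} [Fintype ι] [DecidableEq ι] {g : (ι → ℝ) → ℝ}
    (hg : ContDiff ℝ 1 g) (i : ι) : Continuous (pD i g) :=
  (hg.continuous_fderiv (by norm_num)).clm_apply continuous_const

/-- `D_jφ` has a constant sign. -/
lemma exists_sign (hφ : ContDiff ℝ 1 φ) (hD : ∀ x, pD j φ x ≠ 0) :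
    ∃ s : ℝ, (s = 1 ∨ s = -1) ∧ ∀ x, 0 < s * pD j φ x := by
  have hc := continuous_pD hφ j
  have hpre : IsPreconnected (range (pD j φ)) := isPreconnected_range hc
  by_cases h0 : 0 < pD j φ 0
  · refine ⟨1, Or.inl rfl, fun x => ?_⟩
    by_contra hx
    have : (0 : ℝ) ∈ range (pD j φ) := hpre.Icc_subset ⟨x, rfl⟩ ⟨0, rfl⟩ ⟨by linarith, h0.le⟩
    obtain ⟨z, hz⟩ := this
    exact hD z hz
  · refine ⟨-1, Or.inr rfl, fun x => ?_⟩
    by_contra hx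
    have : (0 : ℝ) ∈ range (pD j φ) :=
      hpre.Icc_subset ⟨0, rfl⟩ ⟨x, rfl⟩ ⟨not_lt.1 h0, by linarith⟩
    obtain ⟨z, hz⟩ := this
    exact hD z hz

variable {s : ℝ}

lemma strictMono_sign (hφ : ContDiff ℝ 1 φ) (hs : ∀ x, 0 < s * pD j φ x)
    (y : {i : Fin d // i ≠ j} → ℝ) : StrictMono fun t => s * φ (insj j t y) := by
  refine strictMono_of_hasDerivAt_pos (f' := fun t => s * pD j φ (insj j t y)) (fun t => ?_)
    fun t => hs _
  exact (hasDerivAt_insj (hφ.differentiable (by norm_num) _)).const_mul s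

lemma zeroAt_unique (hφ : ContDiff ℝ 1 φ) (hs : ∀ x, 0 < s * pD j φ x)
    {y : {i : Fin d // i ≠ j} → ℝ} {t : ℝ} (ht : φ (insj j t y) = 0) :
    zeroAt j φ y = t := by
  refine (strictMono_sign hφ hs y).injective ?_
  simp [ht, zeroAt_spec (j := j) (φ := φ) (y := y) ⟨t, ht⟩]

/-- The implicit function theorem for `ψ`. -/
lemma zeroAt_hasFDerivAt (hφ : ContDiff ℝ 1 φ) (hs : ∀ x, 0 < s * pD j φ x)
    {y₀ : {i : Fin d // i ≠ j} → ℝ} (hy : y₀ ∈ zeroDom j φ) :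
    (∀ᶠ y in 𝓝 y₀, y ∈ zeroDom j φ) ∧
    HasFDerivAt (zeroAt j φ) (gradL fun k =>
      -(pD k.1 φ (insj j (zeroAt j φ y₀) y₀) * (pD j φ (insj j (zeroAt j φ y₀) y₀))⁻¹)) y₀ := by
  set t₀ := zeroAt j φ y₀ with ht₀
  set x₀ := insj j t₀ y₀ with hx₀
  have hz : φ x₀ = 0 := zeroAt_spec hy
  have hD : pD j φ x₀ ≠ 0 := fun h => by have := hs x₀; rw [h] at this; simp at this
  let fn : ({i : Fin d // i ≠ j} → ℝ) × ℝ → ℝ := fun p => φ (insL j p)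
  have hstrict : HasStrictFDerivAt fn ((fderiv ℝ φ x₀).comp (insL j)) (y₀, t₀) := by
    have h1 : HasStrictFDerivAt φ (fderiv ℝ φ x₀) (insL j (y₀, t₀)) := by
      rw [insL_apply]
      exact hφ.contDiffAt.hasStrictFDerivAt (by norm_num)
    exact h1.comp (y₀, t₀) (insL j).hasStrictFDerivAt
  set A := ((fderiv ℝ φ x₀).comp (insL j)) with hA
  have hinr : A ∘L .inr ℝ ({i : Fin d // i ≠ j} → ℝ) ℝ =
      ContinuousLinearEquiv.unitsEquivAut ℝ (Units.mk0 (pD j φ x₀) hD) := by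
    ext
    simp [hA, insL_apply, insj_one, pD]
  have hinv : (A ∘L .inr ℝ ({i : Fin d // i ≠ j} → ℝ) ℝ).IsInvertible := ⟨_, hinr.symm⟩
  have hev := hstrict.eventually_apply_implicitFunctionOfProdDomain hinv
  have hder := (hstrict.hasStrictFDerivAt_implicitFunctionOfProdDomain hinv).hasFDerivAt
  set ψ := hstrict.implicitFunctionOfProdDomain hinv
  have hev' : ∀ᶠ y in 𝓝 y₀, φ (insj j (ψ y) y) = 0 := by
    filter_upwards [hev] with y hy
    simpa [fn, insL_apply, ← hx₀, hz] using hy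
  refine ⟨hev'.mono fun y hy => ⟨_, hy⟩, ?_⟩
  have heq : zeroAt j φ =ᶠ[𝓝 y₀] ψ := hev'.mono fun y hy => zeroAt_unique hφ hs hy
  refine HasFDerivAt.congr_of_eventuallyEq ?_ heq
  refine hder.to_gradL fun k => ?_
  rw [hinr]
  simp [hA, insL_apply, insj_single, pD]

lemma isOpen_zeroDom (hφ : ContDiff ℝ 1 φ) (hs : ∀ x, 0 < s * pD j φ x) :
    IsOpen (zeroDom j φ) :=
  isOpen_iff_mem_nhds.2 fun _ hy => (zeroAt_hasFDerivAt hφ hs hy).1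

/-- The zeros escape to infinity near a point without zero. -/
lemma zeroAt_escape (hφ : ContDiff ℝ 1 φ) (hs : ∀ x, 0 < s * pD j φ x)
    {y₀ : {i : Fin d // i ≠ j} → ℝ} (hy : y₀ ∉ zeroDom j φ) :
    Tendsto (zeroAt j φ) (𝓝[zeroDom j φ] y₀) (cocompact ℝ) := by
  have hs0 : s ≠ 0 := fun h => by have := hs 0; simp [h] at this
  have hcont : ∀ t, Continuous fun y : {i : Fin d // i ≠ j} → ℝ => s * φ (insj j t y) := fun t =>
    continuous_const.mul (hφ.continuous.comp (continuous_insj_right j t))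
  have hne : ∀ t, s * φ (insj j t y₀) ≠ 0 := fun t h => by
    rcases mul_eq_zero.1 h with h | h
    · exact hs0 h
    · exact hy ⟨t, h⟩
  have hK : ∀ M : ℝ, ∀ᶠ y in 𝓝[zeroDom j φ] y₀, M < |zeroAt j φ y| := by
    intro M
    have hcase : 0 < s * φ (insj j (-|M|) y₀) ∨ s * φ (insj j |M| y₀) < 0 := by
      by_contra hcon
      push Not at hcon
      have hle : -|M| ≤ |M| := by linarith [abs_nonneg M]
      obtain ⟨t, -, ht⟩ := intermediate_value_Icc (f := fun t => s * φ (insj j t y₀)) hle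
        (continuous_const.mul (hφ.continuous.comp (continuous_insj_left j y₀))).continuousOn
        (show (0 : ℝ) ∈ _ from ⟨hcon.1, hcon.2⟩)
      exact hne t ht
    rcases hcase with h | h
    · have hev : ∀ᶠ y in 𝓝 y₀, 0 < s * φ (insj j (-|M|) y) :=
        ((hcont _).tendsto y₀).eventually_const_lt h
      filter_upwards [hev.filter_mono nhdsWithin_le_nhds, self_mem_nhdsWithin] with y hy1 hy2
      have h0 := zeroAt_spec hy2
      have : zeroAt j φ y < -|M| := by
        rw [← (strictMono_sign hφ hs y).lt_iff_lt]
        simpa [h0] using hy1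
      have := neg_abs_le (zeroAt j φ y)
      linarith [le_abs_self M]
    · have hev : ∀ᶠ y in 𝓝 y₀, s * φ (insj j |M| y) < 0 :=
        ((hcont _).tendsto y₀).eventually_lt_const h
      filter_upwards [hev.filter_mono nhdsWithin_le_nhds, self_mem_nhdsWithin] with y hy1 hy2
      have h0 := zeroAt_spec hy2
      have : |M| < zeroAt j φ y := by
        rw [← (strictMono_sign hφ hs y).lt_iff_lt]
        simpa [h0] using hy1
      have := le_abs_self (zeroAt j φ y)
      linarith [le_abs_self M]
  refine tendsto_cocompact_of_tendsto_dist_comp_atTop 0 (tendsto_atTop.2 fun M => ?_)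
  filter_upwards [hK M] with y hy
  simpa using hy.le

/-- Weighted decay of `H`: bounded by a function of `x_j` vanishing at infinity times a
continuous function of the other coordinates. -/
def Decay (j : Fin d) (H : (Fin d → ℝ) → ℝ) : Prop :=
  ∃ (ω : ℝ → ℝ) (V : ({i : Fin d // i ≠ j} → ℝ) → ℝ), Tendsto ω (cocompact ℝ) (𝓝 0) ∧
    Continuous V ∧ ∀ t y, |H (insj j t y)| ≤ ω t * V y

lemma bd_tendsto (hφ : ContDiff ℝ 1 φ) (hs : ∀ x, 0 < s * pD j φ x) {H : (Fin d → ℝ) → ℝ}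
    (hH : Decay j H) {y₀ : {i : Fin d // i ≠ j} → ℝ} (hy : y₀ ∉ zeroDom j φ) :
    Tendsto (bd j φ H) (𝓝 y₀) (𝓝 0) := by
  obtain ⟨ω, V, hω, hV, hb⟩ := hH
  have h1 : Tendsto (fun y => ω (zeroAt j φ y) * V y) (𝓝[zeroDom j φ] y₀) (𝓝 0) := by
    have := (hω.comp (zeroAt_escape hφ hs hy)).mul
      ((hV.tendsto y₀).mono_left (nhdsWithin_le_nhds (s := zeroDom j φ)))
    simpa using this
  rw [Metric.tendsto_nhds]
  intro ε hε
  have h2 := h1.eventually_lt_const hε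
  filter_upwards [eventually_nhdsWithin_iff.1 h2] with y hy2
  rw [Real.dist_eq, sub_zero]
  by_cases hyU : y ∈ zeroDom j φ
  · rw [bd_of_mem hyU]; exact (hb _ _).trans_lt (hy2 hyU)
  · rw [bd_of_notMem hyU]; simpa using hε

lemma bd_tang_eq {H : (Fin d → ℝ) → ℝ} {y : {i : Fin d // i ≠ j} → ℝ} (h : y ∈ zeroDom j φ)
    (k : Fin d) : bd j φ (tang j φ k H) y =
      pD k H (insj j (zeroAt j φ y) y) + -(pD k φ (insj j (zeroAt j φ y) y) *
        (pD j φ (insj j (zeroAt j φ y) y))⁻¹) * pD j H (insj j (zeroAt j φ y) y) := by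
  rw [bd_of_mem h, tang]; ring

lemma bd_hasFDerivAt_of_mem (hφ : ContDiff ℝ 1 φ) (hs : ∀ x, 0 < s * pD j φ x)
    {H : (Fin d → ℝ) → ℝ} (hHd : Differentiable ℝ H) {y : {i : Fin d // i ≠ j} → ℝ}
    (hy : y ∈ zeroDom j φ) :
    HasFDerivAt (bd j φ H) (gradL fun k => bd j φ (tang j φ k.1 H) y) y := by
  obtain ⟨hev, hder⟩ := zeroAt_hasFDerivAt hφ hs hy
  have h1 := hasFDerivAt_comp_insj hder (hHd _)
  have h2 : (fun k : {i : Fin d // i ≠ j} => bd j φ (tang j φ k.1 H) y) = _ :=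
    funext fun k => bd_tang_eq hy k.1
  rw [h2]
  refine h1.congr_of_eventuallyEq ?_
  filter_upwards [hev] with z hz
  exact bd_of_mem hz

lemma bd_continuous (hφ : ContDiff ℝ 1 φ) (hs : ∀ x, 0 < s * pD j φ x)
    {H : (Fin d → ℝ) → ℝ} (hHd : Differentiable ℝ H) (hH : Decay j H) :
    Continuous (bd j φ H) := by
  rw [continuous_iff_continuousAt]
  intro y
  by_cases hy : y ∈ zeroDom j φ
  · exact (bd_hasFDerivAt_of_mem hφ hs hHd hy).continuousAt
  · have := bd_tendsto hφ hs hH hy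
    rwa [ContinuousAt, bd_of_notMem hy]

lemma gradL_bd_eventually_le (hφ : ContDiff ℝ 1 φ) (hs : ∀ x, 0 < s * pD j φ x)
    {K : {i : Fin d // i ≠ j} → (Fin d → ℝ) → ℝ} (hK : ∀ k, Decay j (K k))
    {y₀ : {i : Fin d // i ≠ j} → ℝ} (hy : y₀ ∉ zeroDom j φ) {ε : ℝ} (hε : 0 < ε) :
    ∀ᶠ y in 𝓝 y₀, ‖gradL fun k => bd j φ (K k) y‖ ≤ ε := by
  have : Tendsto (fun y => ∑ k : {i : Fin d // i ≠ j}, |bd j φ (K k) y|) (𝓝 y₀) (𝓝 0) := by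
    have := tendsto_finsetSum (Finset.univ : Finset {i : Fin d // i ≠ j})
      fun k _ => (bd_tendsto hφ hs (hK k) hy).abs
    simpa using this
  filter_upwards [this.eventually_le_const hε] with z hz
  exact (norm_gradL_le _).trans hz

lemma gradL_bd_eq_zero {K : {i : Fin d // i ≠ j} → (Fin d → ℝ) → ℝ}
    {y : {i : Fin d // i ≠ j} → ℝ} (hy : y ∉ zeroDom j φ) :
    (gradL fun k => bd j φ (K k) y) = 0 := by
  have : (fun k => bd j φ (K k) y) = fun _ => 0 := funext fun k => bd_of_notMem hy
  rw [this]
  ext z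
  simp [gradL_apply]

/-- Differentiation of boundary terms, including at points without zero. -/
lemma bd_hasFDerivAt (hφ : ContDiff ℝ 1 φ) (hs : ∀ x, 0 < s * pD j φ x) {H : (Fin d → ℝ) → ℝ}
    (hHd : Differentiable ℝ H) (hH : Decay j H)
    (hT : ∀ k : {i : Fin d // i ≠ j}, Decay j (tang j φ k.1 H)) (y : {i : Fin d // i ≠ j} → ℝ) :
    HasFDerivAt (bd j φ H) (gradL fun k => bd j φ (tang j φ k.1 H) y) y := by
  by_cases hy : y ∈ zeroDom j φ
  · exact bd_hasFDerivAt_of_mem hφ hs hHd hy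
  rw [gradL_bd_eq_zero (K := fun k => tang j φ k.1 H) hy]
  have hlim : ∀ ε > 0, ∀ᶠ z in 𝓝 y, z ∈ zeroDom j φ →
      ‖gradL fun k : {i : Fin d // i ≠ j} => bd j φ (tang j φ k.1 H) z‖ ≤ ε := by
    intro ε hε
    filter_upwards [gradL_bd_eventually_le hφ hs hT hy hε] with z hz _
    exact hz
  have hder : ∀ z ∈ (univ : Set ({i : Fin d // i ≠ j} → ℝ)), z ∈ zeroDom j φ →
      HasFDerivAt (bd j φ H) (gradL fun k => bd j φ (tang j φ k.1 H) z) z :=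
    fun z _ hz => bd_hasFDerivAt_of_mem hφ hs hHd hz
  have hzero : ∀ z ∈ (univ : Set ({i : Fin d // i ≠ j} → ℝ)), z ∉ zeroDom j φ → bd j φ H z = 0 :=
    fun z _ hz => bd_of_notMem hz
  have hcont : ContinuousOn (bd j φ H) univ := (bd_continuous hφ hs hHd hH).continuousOn
  exact hasFDerivAt_zero_of_vanish (isOpen_zeroDom hφ hs) hy univ_mem hzero hcont hder hlim

end ZeroSet

/-! ### Differentiation of integrals over `φ ≥ 0` -/

section Integrals

variable {d : ℕ} {j : Fin d} {φ : (Fin d → ℝ) → ℝ} {s : ℝ}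

/-- `∫ k(t) 1{φ(t,y) ≥ 0} dt`. -/
noncomputable def regInt (j : Fin d) (φ : (Fin d → ℝ) → ℝ) (k : ℝ → ℝ)
    (y : {i : Fin d // i ≠ j} → ℝ) : ℝ :=
  ∫ t, if 0 ≤ φ (insj j t y) then k t else 0

/-- `∫ G(t,y) 1{φ(t,y) ≥ 0} ρ(t) dt`. -/
noncomputable def vol (j : Fin d) (φ : (Fin d → ℝ) → ℝ) (ρ : ℝ → ℝ) (G : (Fin d → ℝ) → ℝ)
    (y : {i : Fin d // i ≠ j} → ℝ) : ℝ :=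
  ∫ t, (if 0 ≤ φ (insj j t y) then G (insj j t y) else 0) * ρ t

lemma measurableSet_region (hφ : ContDiff ℝ 1 φ) (y : {i : Fin d // i ≠ j} → ℝ) :
    MeasurableSet {t | 0 ≤ φ (insj j t y)} :=
  (isClosed_le continuous_const (hφ.continuous.comp (continuous_insj_left j y))).measurableSet

lemma integrable_region (hφ : ContDiff ℝ 1 φ) {k : ℝ → ℝ} (hk : Integrable k)
    (y : {i : Fin d // i ≠ j} → ℝ) :
    Integrable fun t => if 0 ≤ φ (insj j t y) then k t else 0 :=
  hk.indicator (measurableSet_region hφ y)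

lemma hasDerivAt_integral_Iic {k : ℝ → ℝ} (hk : Integrable k) (hkc : Continuous k) (x : ℝ) :
    HasDerivAt (fun x => ∫ t in Iic x, k t) (k x) x := by
  have h1 : HasDerivAt (fun u => ∫ t in (0 : ℝ)..u, k t) (k x) x :=
    intervalIntegral.integral_hasDerivAt_right (hk.intervalIntegrable)
      (hkc.stronglyMeasurableAtFilter _ _) hkc.continuousAt
  have h2 : (fun x => ∫ t in Iic x, k t) = fun u => (∫ t in Iic (0 : ℝ), k t) +
      ∫ t in (0 : ℝ)..u, k t := by
    ext u
    rw [← intervalIntegral.integral_Iic_sub_Iic hk.integrableOn hk.integrableOn]; ring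
  rw [h2]
  exact h1.const_add _

lemma ae_ne_zero (hφ : ContDiff ℝ 1 φ) (hs : ∀ x, 0 < s * pD j φ x)
    (y : {i : Fin d // i ≠ j} → ℝ) : ∀ᵐ t : ℝ, φ (insj j t y) ≠ 0 := by
  have hsub : {t | φ (insj j t y) = 0} ⊆ {zeroAt j φ y} := fun t ht =>
    (zeroAt_unique hφ hs ht).symm
  have : volume {t | φ (insj j t y) = 0} = 0 := measure_mono_null hsub (by simp)
  rw [ae_iff]; simpa using this

/-- Where `φ ≠ 0`, the indicator of `φ ≥ 0` is locally constant in `y`. -/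
lemma eventually_region_iff (hφ : ContDiff ℝ 1 φ) {y₀ : {i : Fin d // i ≠ j} → ℝ} {t : ℝ}
    (ht : φ (insj j t y₀) ≠ 0) :
    ∀ᶠ y in 𝓝 y₀, (0 ≤ φ (insj j t y) ↔ 0 ≤ φ (insj j t y₀)) := by
  have hc : Continuous fun y : {i : Fin d // i ≠ j} → ℝ => φ (insj j t y) :=
    hφ.continuous.comp (continuous_insj_right j t)
  rcases lt_or_gt_of_ne ht with h | h
  · filter_upwards [(hc.tendsto y₀).eventually_lt_const h] with y hy
    constructor <;> intro h' <;> linarith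
  · filter_upwards [(hc.tendsto y₀).eventually_const_lt h] with y hy
    constructor <;> intro h' <;> linarith

lemma regInt_continuous (hφ : ContDiff ℝ 1 φ) (hs : ∀ x, 0 < s * pD j φ x)
    {k : ℝ → ℝ} (hk : Integrable k) : Continuous (regInt j φ k) := by
  rw [continuous_iff_continuousAt]
  intro y₀
  refine continuousAt_of_dominated (bound := fun t => |k t|) ?_ ?_ hk.abs ?_
  · exact Eventually.of_forall fun y => (integrable_region hφ hk y).aestronglyMeasurable
  · refine Eventually.of_forall fun y => Eventually.of_forall fun t => ?_
    split_ifs <;> simp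
  · filter_upwards [ae_ne_zero hφ hs y₀] with t ht
    refine (continuousAt_const (y := if 0 ≤ φ (insj j t y₀) then k t else 0)).congr ?_
    filter_upwards [eventually_region_iff hφ ht] with y hy
    simp only [hy]

lemma regInt_hasFDerivAt_of_mem (hφ : ContDiff ℝ 1 φ) (hs1 : s = 1 ∨ s = -1)
    (hs : ∀ x, 0 < s * pD j φ x) {k : ℝ → ℝ} (hk : Integrable k) (hkc : Continuous k)
    {y : {i : Fin d // i ≠ j} → ℝ} (hy : y ∈ zeroDom j φ) :
    HasFDerivAt (regInt j φ k) (gradL fun m =>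
      bd j φ (fun x => s * (k (x j) * (pD m.1 φ x * (pD j φ x)⁻¹))) y) y := by
  obtain ⟨hev, hder⟩ := zeroAt_hasFDerivAt hφ hs hy
  have hI := (hasDerivAt_integral_Iic hk hkc (zeroAt j φ y)).comp_hasFDerivAt y hder
  rcases hs1 with rfl | rfl
  · have heq : regInt j φ k =ᶠ[𝓝 y] fun z => (∫ t, k t) - ∫ t in Iic (zeroAt j φ z), k t := by
      filter_upwards [hev] with z hz
      have h1 : (fun t => if 0 ≤ φ (insj j t z) then k t else 0) =
          (Ici (zeroAt j φ z)).indicator k := by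
        ext t
        have := (strictMono_sign hφ hs z).le_iff_le (a := zeroAt j φ z) (b := t)
        simp only [one_mul, zeroAt_spec hz] at this
        simp [indicator, this]
      rw [regInt, h1, integral_indicator measurableSet_Ici, integral_Ici_eq_integral_Ioi,
        eq_sub_iff_add_eq, add_comm, ← compl_Iic]
      exact integral_add_compl measurableSet_Iic hk
    refine HasFDerivAt.congr_of_eventuallyEq ?_ heq
    refine (hI.const_sub _).to_gradL fun m => ?_
    rw [bd_of_mem hy]
    simp [gradL_single, insj_self]
  · have heq : regInt j φ k =ᶠ[𝓝 y] fun z => ∫ t in Iic (zeroAt j φ z), k t := by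
      filter_upwards [hev] with z hz
      have h1 : (fun t => if 0 ≤ φ (insj j t z) then k t else 0) =
          (Iic (zeroAt j φ z)).indicator k := by
        ext t
        have := (strictMono_sign hφ hs z).le_iff_le (a := t) (b := zeroAt j φ z)
        simp only [zeroAt_spec hz, mul_zero, neg_mul, one_mul, neg_nonpos] at this
        simp [indicator, this]
      rw [regInt, h1, integral_indicator measurableSet_Iic]
    refine HasFDerivAt.congr_of_eventuallyEq ?_ heq
    refine hI.to_gradL fun m => ?_
    rw [bd_of_mem hy]
    simp [gradL_single, insj_self]

/-- Off the zero domain the sign of `φ (·, y)` is constant. -/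
lemma region_iff_of_notMem (hφ : ContDiff ℝ 1 φ) {y : {i : Fin d // i ≠ j} → ℝ}
    (hy : y ∉ zeroDom j φ) (t : ℝ) : 0 ≤ φ (insj j t y) ↔ 0 ≤ φ (insj j 0 y) := by
  have hpre : IsPreconnected (range fun t => φ (insj j t y)) :=
    isPreconnected_range (hφ.continuous.comp (continuous_insj_left j y))
  have key : ∀ a b, 0 ≤ φ (insj j a y) → 0 ≤ φ (insj j b y) := by
    intro a b ha
    by_contra hb
    obtain ⟨z, hz⟩ := hpre.Icc_subset ⟨b, rfl⟩ ⟨a, rfl⟩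
      (show (0 : ℝ) ∈ Icc _ _ from ⟨(not_le.1 hb).le, ha⟩)
    exact hy ⟨z, hz⟩
  exact ⟨key _ _, key _ _⟩

lemma regInt_hasFDerivAt (hφ : ContDiff ℝ 1 φ) (hs1 : s = 1 ∨ s = -1)
    (hs : ∀ x, 0 < s * pD j φ x) {k : ℝ → ℝ} (hk : Integrable k) (hkc : Continuous k)
    (hdec : ∀ m : {i : Fin d // i ≠ j},
      Decay j fun x => s * (k (x j) * (pD m.1 φ x * (pD j φ x)⁻¹)))
    (y : {i : Fin d // i ≠ j} → ℝ) :
    HasFDerivAt (regInt j φ k) (gradL fun m =>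
      bd j φ (fun x => s * (k (x j) * (pD m.1 φ x * (pD j φ x)⁻¹))) y) y := by
  by_cases hy : y ∈ zeroDom j φ
  · exact regInt_hasFDerivAt_of_mem hφ hs1 hs hk hkc hy
  rw [gradL_bd_eq_zero (K := fun m x => s * (k (x j) * (pD m.1 φ x * (pD j φ x)⁻¹))) hy]
  have h0 : φ (insj j 0 y) ≠ 0 := fun h => hy ⟨0, h⟩
  have hV := eventually_region_iff hφ h0
  have hlim : ∀ ε > 0, ∀ᶠ z in 𝓝 y, z ∈ zeroDom j φ →
      ‖gradL fun m : {i : Fin d // i ≠ j} =>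
        bd j φ (fun x => s * (k (x j) * (pD m.1 φ x * (pD j φ x)⁻¹))) z‖ ≤ ε := by
    intro ε hε
    filter_upwards [gradL_bd_eventually_le hφ hs hdec hy hε] with z hz _
    exact hz
  have hder : ∀ z ∈ {z : {i : Fin d // i ≠ j} → ℝ | (0 ≤ φ (insj j 0 z) ↔ 0 ≤ φ (insj j 0 y))},
      z ∈ zeroDom j φ →
      HasFDerivAt (fun z => regInt j φ k z - regInt j φ k y) (gradL fun m =>
        bd j φ (fun x => s * (k (x j) * (pD m.1 φ x * (pD j φ x)⁻¹))) z) z :=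
    fun z _ hz => (regInt_hasFDerivAt_of_mem hφ hs1 hs hk hkc hz).sub_const _
  have hzero : ∀ z ∈ {z : {i : Fin d // i ≠ j} → ℝ | (0 ≤ φ (insj j 0 z) ↔ 0 ≤ φ (insj j 0 y))},
      z ∉ zeroDom j φ → regInt j φ k z - regInt j φ k y = 0 := by
    intro z hz hzU
    have hz' : 0 ≤ φ (insj j 0 z) ↔ 0 ≤ φ (insj j 0 y) := hz
    simp only [regInt, region_iff_of_notMem hφ hzU, region_iff_of_notMem hφ hy, hz', sub_self]
  have hcont : ContinuousOn (fun z => regInt j φ k z - regInt j φ k y)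
      {z : {i : Fin d // i ≠ j} → ℝ | (0 ≤ φ (insj j 0 z) ↔ 0 ≤ φ (insj j 0 y))} :=
    ((regInt_continuous hφ hs hk).sub continuous_const).continuousOn
  have := hasFDerivAt_zero_of_vanish (isOpen_zeroDom hφ hs) hy hV hzero hcont hder hlim
  simpa using this.add_const (regInt j φ k y)

lemma hasFDerivAt_slice {G : (Fin d → ℝ) → ℝ} (hG : ContDiff ℝ 1 G) (t : ℝ)
    (y : {i : Fin d // i ≠ j} → ℝ) :
    HasFDerivAt (fun y => G (insj j t y)) (gradL fun m => pD m.1 G (insj j t y)) y := by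
  have h0 : HasFDerivAt (fun _ : {i : Fin d // i ≠ j} → ℝ => t) (gradL fun _ => 0) y :=
    (hasFDerivAt_const t y).to_gradL fun k => by simp
  have := hasFDerivAt_comp_insj h0 (hG.differentiable (by norm_num) _)
  simpa using this

lemma aestronglyMeasurable_gradL {ι : Type} [Fintype ι] {c : ℝ → ι → ℝ}
    (hc : ∀ m, AEStronglyMeasurable fun t => c t m) :
    AEStronglyMeasurable fun t => gradL (c t) := by
  unfold gradL
  refine Finset.aestronglyMeasurable_fun_sum _ fun m _ => ?_
  exact (hc m).smul_const _

/-- A weighted integrable bound for a function on `ℝ^d`. -/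
def IntBound (j : Fin d) (ρ : ℝ → ℝ) (w : ℝ → ℝ) (V : ({i : Fin d // i ≠ j} → ℝ) → ℝ)
    (G : (Fin d → ℝ) → ℝ) : Prop := ∀ t y, |G (insj j t y) * ρ t| ≤ w t * V y

lemma IntBound.integrable {ρ w : ℝ → ℝ} {V : ({i : Fin d // i ≠ j} → ℝ) → ℝ}
    {G : (Fin d → ℝ) → ℝ} (h : IntBound j ρ w V G) (hw : Integrable w) (hG : Continuous G)
    (hρ : Continuous ρ) (y : {i : Fin d // i ≠ j} → ℝ) :
    Integrable fun t => G (insj j t y) * ρ t := by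
  refine (hw.mul_const (V y)).mono' ?_ (Eventually.of_forall fun t => h t y)
  exact ((hG.comp (continuous_insj_left j y)).mul hρ).aestronglyMeasurable

lemma vol_diff_hasFDerivAt (hφ : ContDiff ℝ 1 φ) (hs : ∀ x, 0 < s * pD j φ x)
    {ρ w : ℝ → ℝ} {V : ({i : Fin d // i ≠ j} → ℝ) → ℝ} {G : (Fin d → ℝ) → ℝ}
    (hρ : Continuous ρ) (hw : Integrable w) (hw0 : ∀ t, 0 ≤ w t) (hV : Continuous V)
    (hG : ContDiff ℝ 1 G) (hGb : IntBound j ρ w V G)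
    (hDG : ∀ m : {i : Fin d // i ≠ j}, IntBound j ρ w V (pD m.1 G))
    (y₀ : {i : Fin d // i ≠ j} → ℝ) :
    HasFDerivAt (fun y => ∫ t, (if 0 ≤ φ (insj j t y) then
        (G (insj j t y) - G (insj j t y₀)) * ρ t else 0))
      (gradL fun m => vol j φ ρ (pD m.1 G) y₀) y₀ := by
  obtain ⟨δ, hδ, hball⟩ := Metric.mem_nhds_iff.1
    ((hV.tendsto y₀).eventually_le_const (lt_add_one (V y₀)))
  let N : ℝ := ((Fintype.card {i : Fin d // i ≠ j} : ℕ) : ℝ)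
  have hGi : ∀ y, Integrable fun t => (G (insj j t y) - G (insj j t y₀)) * ρ t := by
    intro y
    have := (hGb.integrable hw hG.continuous hρ y).sub (hGb.integrable hw hG.continuous hρ y₀)
    refine this.congr (Eventually.of_forall fun t => ?_)
    simp only [Pi.sub_apply]; ring
  have key := hasFDerivAt_integral_of_dominated_loc_of_lip' (𝕜 := ℝ) (μ := volume)
    (F := fun (y : {i : Fin d // i ≠ j} → ℝ) (t : ℝ) => if 0 ≤ φ (insj j t y) then
        (G (insj j t y) - G (insj j t y₀)) * ρ t else 0) (x₀ := y₀)
    (F' := fun t => gradL fun m : {i : Fin d // i ≠ j} =>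
      (if 0 ≤ φ (insj j t y₀) then pD m.1 G (insj j t y₀) else 0) * ρ t)
    (bound := fun t => N * (w t * (V y₀ + 1))) (Metric.ball_mem_nhds y₀ hδ)
    (fun y _ => (integrable_region hφ (hGi y) y).aestronglyMeasurable)
    (integrable_region hφ (hGi y₀) y₀) ?_ ?_ ((hw.mul_const _).const_mul _) ?_
  · refine key.2.to_gradL fun m => ?_
    rw [ContinuousLinearMap.integral_apply key.1]
    simp only [gradL_single, vol]
  · refine aestronglyMeasurable_gradL fun m => ?_
    refine AEStronglyMeasurable.mul ?_ hρ.aestronglyMeasurable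
    have : AEStronglyMeasurable (fun t => pD m.1 G (insj j t y₀)) volume :=
      ((continuous_pD hG m.1).comp (continuous_insj_left j y₀)).aestronglyMeasurable
    exact this.indicator (measurableSet_region hφ y₀)
  · refine Eventually.of_forall fun t y hy => ?_
    have hb0 : 0 ≤ N * (w t * (V y₀ + 1)) * ‖y - y₀‖ := by
      have h1 : 0 ≤ w t * (V y₀ + 1) := by
        have := (abs_nonneg _).trans (hGb t y₀)
        linarith [hw0 t]
      positivity
    have hmv : ‖G (insj j t y) * ρ t - G (insj j t y₀) * ρ t‖ ≤
        N * (w t * (V y₀ + 1)) * ‖y - y₀‖ := by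
      refine Convex.norm_image_sub_le_of_norm_hasFDerivWithin_le (𝕜 := ℝ)
        (f := fun y => G (insj j t y) * ρ t) (s := Metric.ball y₀ δ)
        (f' := fun y => gradL fun m : {i : Fin d // i ≠ j} => pD m.1 G (insj j t y) * ρ t)
        (fun z hz => ?_) (fun z hz => ?_) (convex_ball _ _) (Metric.mem_ball_self hδ) hy
      · refine HasFDerivAt.hasFDerivWithinAt ?_
        refine ((hasFDerivAt_slice hG t z).mul_const (ρ t)).to_gradL fun m => ?_
        simp [gradL_single, mul_comm]
      · refine (norm_gradL_le _).trans ?_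
        have : ∀ m ∈ (Finset.univ : Finset {i : Fin d // i ≠ j}),
            |pD m.1 G (insj j t z) * ρ t| ≤ w t * (V y₀ + 1) := fun m _ =>
          (hDG m t z).trans (mul_le_mul_of_nonneg_left (hball hz) (hw0 t))
        refine (Finset.sum_le_card_nsmul _ _ _ this).trans ?_
        simp [N, Finset.card_univ]
    simp only [sub_self, zero_mul, ite_self, sub_zero]
    split_ifs
    · rw [sub_mul]; exact hmv
    · simpa using hb0
  · filter_upwards [ae_ne_zero hφ hs y₀] with t ht
    have hev := eventually_region_iff hφ ht
    by_cases h : 0 ≤ φ (insj j t y₀)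
    · have h1 : HasFDerivAt (fun y => (G (insj j t y) - G (insj j t y₀)) * ρ t)
          (gradL fun m : {i : Fin d // i ≠ j} =>
            (if 0 ≤ φ (insj j t y₀) then pD m.1 G (insj j t y₀) else 0) * ρ t) y₀ := by
        refine (((hasFDerivAt_slice hG t y₀).sub_const _).mul_const (ρ t)).to_gradL fun m => ?_
        simp [gradL_single, h, mul_comm]
      refine h1.congr_of_eventuallyEq ?_
      filter_upwards [hev] with y hy
      rw [if_pos (hy.2 h)]
    · have h1 : HasFDerivAt (fun _ : {i : Fin d // i ≠ j} → ℝ => (0 : ℝ))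
          (gradL fun m : {i : Fin d // i ≠ j} =>
            (if 0 ≤ φ (insj j t y₀) then pD m.1 G (insj j t y₀) else 0) * ρ t) y₀ := by
        refine (hasFDerivAt_const (0 : ℝ) y₀).to_gradL fun m => ?_
        simp [h]
      refine h1.congr_of_eventuallyEq ?_
      filter_upwards [hev] with y hy
      rw [if_neg (fun h' => h (hy.1 h'))]

/-- Differentiation of the preintegrated function. At `y₀` the integrand is split as
`(G(·,y) - G(·,y₀)) 1{φ(·,y) ≥ 0} + G(·,y₀) 1{φ(·,y) ≥ 0}`: the first part is differentiated under
the integral sign, the second one by moving the endpoint `ψ y`. -/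
lemma vol_hasFDerivAt (hφ : ContDiff ℝ 1 φ) (hs1 : s = 1 ∨ s = -1)
    (hs : ∀ x, 0 < s * pD j φ x)
    {ρ w : ℝ → ℝ} {V : ({i : Fin d // i ≠ j} → ℝ) → ℝ} {G : (Fin d → ℝ) → ℝ}
    (hρ : Continuous ρ) (hw : Integrable w) (hw0 : ∀ t, 0 ≤ w t) (hV : Continuous V)
    (hG : ContDiff ℝ 1 G) (hGb : IntBound j ρ w V G)
    (hDG : ∀ m : {i : Fin d // i ≠ j}, IntBound j ρ w V (pD m.1 G))
    (y₀ : {i : Fin d // i ≠ j} → ℝ)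
    (hdec : ∀ m : {i : Fin d // i ≠ j}, Decay j fun x =>
      s * (G (insj j (x j) y₀) * ρ (x j) * (pD m.1 φ x * (pD j φ x)⁻¹))) :
    HasFDerivAt (vol j φ ρ G) (gradL fun m => vol j φ ρ (pD m.1 G) y₀ +
      bd j φ (fun x => s * (G x * ρ (x j) * (pD m.1 φ x * (pD j φ x)⁻¹))) y₀) y₀ := by
  have hGi := hGb.integrable hw hG.continuous hρ
  have h1 := vol_diff_hasFDerivAt hφ hs hρ hw hw0 hV hG hGb hDG y₀
  have h2 := regInt_hasFDerivAt hφ hs1 hs (hGi y₀)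
    ((hG.continuous.comp (continuous_insj_left j y₀)).mul hρ) hdec y₀
  have h3 := (h1.add h2).to_gradL (c := fun m => vol j φ ρ (pD m.1 G) y₀ +
      bd j φ (fun x => s * (G x * ρ (x j) * (pD m.1 φ x * (pD j φ x)⁻¹))) y₀) fun m => by
    rw [add_apply, gradL_single, gradL_single]
    congr 1
    by_cases hy : y₀ ∈ zeroDom j φ
    · rw [bd_of_mem hy, bd_of_mem hy, insj_self]
    · rw [bd_of_notMem hy, bd_of_notMem hy]
  refine h3.congr_of_eventuallyEq (Eventually.of_forall fun y => ?_)
  have hGd : Integrable fun t => (G (insj j t y) - G (insj j t y₀)) * ρ t := by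
    refine ((hGi y).sub (hGi y₀)).congr (Eventually.of_forall fun t => ?_)
    simp only [Pi.sub_apply]; ring
  simp only [vol, regInt, Pi.add_apply]
  rw [← integral_add (integrable_region hφ hGd y) (integrable_region hφ (hGi y₀) y)]
  refine integral_congr_ae (Eventually.of_forall fun t => ?_)
  dsimp only
  split_ifs <;> ring

end Integrals

/-! ### The distribution function and its weight -/

section CDF

variable {ρ : ℝ → ℝ}

/-- The weight `min (Φ t) (1 - Φ t)`. -/
noncomputable def mw (ρ : ℝ → ℝ) (t : ℝ) : ℝ := min (cdf ρ t) (1 - cdf ρ t)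

lemma cdf_hasDerivAt (hc : Continuous ρ) (hi : Integrable ρ) (t : ℝ) :
    HasDerivAt (cdf ρ) (ρ t) t := hasDerivAt_integral_Iic hi hc t

lemma cdf_strictMono (hc : Continuous ρ) (hpos : ∀ t, 0 < ρ t) (hi : Integrable ρ) :
    StrictMono (cdf ρ) :=
  strictMono_of_hasDerivAt_pos (fun t => cdf_hasDerivAt hc hi t) hpos

lemma cdf_continuous (hc : Continuous ρ) (hi : Integrable ρ) : Continuous (cdf ρ) :=
  continuous_iff_continuousAt.2 fun t => (cdf_hasDerivAt hc hi t).continuousAt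

lemma cdf_pos (hc : Continuous ρ) (hpos : ∀ t, 0 < ρ t) (hi : Integrable ρ) (t : ℝ) :
    0 < cdf ρ t := by
  have h1 : cdf ρ (t - 1) < cdf ρ t := cdf_strictMono hc hpos hi (by linarith)
  have h2 : 0 ≤ cdf ρ (t - 1) := integral_nonneg fun x => (hpos x).le
  linarith

lemma cdf_lt_one (hc : Continuous ρ) (hpos : ∀ t, 0 < ρ t) (hi : Integrable ρ)
    (h1 : ∫ t : ℝ, ρ t = 1) (t : ℝ) : cdf ρ t < 1 := by
  have h2 : cdf ρ t < cdf ρ (t + 1) := cdf_strictMono hc hpos hi (by linarith)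
  have h3 : cdf ρ (t + 1) ≤ 1 := by
    rw [← h1]
    exact setIntegral_le_integral hi (Eventually.of_forall fun x => (hpos x).le)
  linarith

lemma cdf_tendsto_atTop (hi : Integrable ρ) (h1 : ∫ t : ℝ, ρ t = 1) :
    Tendsto (cdf ρ) atTop (𝓝 1) := by
  rw [← h1]
  exact (aecover_Iic tendsto_id).integral_tendsto_of_countably_generated hi

lemma cdf_tendsto_atBot (hi : Integrable ρ) (h1 : ∫ t : ℝ, ρ t = 1) :
    Tendsto (cdf ρ) atBot (𝓝 0) := by
  have h2 : Tendsto (fun x => ∫ t in Ioi x, ρ t) atBot (𝓝 1) := by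
    rw [← h1]
    exact (aecover_Ioi tendsto_id).integral_tendsto_of_countably_generated hi
  have h3 : cdf ρ = fun x => 1 - ∫ t in Ioi x, ρ t := by
    ext x
    rw [cdf, eq_sub_iff_add_eq, ← h1, ← compl_Iic]
    exact integral_add_compl measurableSet_Iic hi
  rw [h3]
  simpa using h2.const_sub 1

lemma mw_pos (hc : Continuous ρ) (hpos : ∀ t, 0 < ρ t) (hi : Integrable ρ)
    (h1 : ∫ t : ℝ, ρ t = 1) (t : ℝ) : 0 < mw ρ t :=
  lt_min (cdf_pos hc hpos hi t) (by linarith [cdf_lt_one hc hpos hi h1 t])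

lemma mw_le_one (hc : Continuous ρ) (hpos : ∀ t, 0 < ρ t) (hi : Integrable ρ)
    (h1 : ∫ t : ℝ, ρ t = 1) (t : ℝ) : mw ρ t ≤ 1 :=
  (min_le_left _ _).trans (cdf_lt_one hc hpos hi h1 t).le

lemma mw_continuous (hc : Continuous ρ) (hi : Integrable ρ) : Continuous (mw ρ) :=
  (cdf_continuous hc hi).min (continuous_const.sub (cdf_continuous hc hi))

lemma mw_rpow_continuous (hc : Continuous ρ) (hpos : ∀ t, 0 < ρ t) (hi : Integrable ρ)
    (h1 : ∫ t : ℝ, ρ t = 1) (a : ℝ) : Continuous fun t => mw ρ t ^ a :=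
  (mw_continuous hc hi).rpow_const fun t => Or.inl (mw_pos hc hpos hi h1 t).ne'

/-- `∫ min(Φ,1-Φ)^{-b} ρ < ∞` for `b < 1`, since `Φ^{1-b}` and `(1-Φ)^{1-b}` are bounded
primitives up to constants. -/
lemma mw_integrable (hc : Continuous ρ) (hpos : ∀ t, 0 < ρ t) (hi : Integrable ρ)
    (h1 : ∫ t : ℝ, ρ t = 1) {b : ℝ} (hb : b < 1) :
    Integrable fun t => mw ρ t ^ (-b) * ρ t := by
  have hb' : 0 < 1 - b := by linarith
  have hcp := cdf_pos hc hpos hi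
  have hcl : ∀ t, 0 < 1 - cdf ρ t := fun t => by linarith [cdf_lt_one hc hpos hi h1 t]
  have hd1 : ∀ t, HasDerivAt (fun t => cdf ρ t ^ (1 - b)) (ρ t * (1 - b) * cdf ρ t ^ (-b)) t := by
    intro t
    have := (cdf_hasDerivAt hc hi t).rpow_const (p := 1 - b) (Or.inl (hcp t).ne')
    simpa [show 1 - b - 1 = -b by ring] using this
  have hd2 : ∀ t, HasDerivAt (fun t => -(1 - cdf ρ t) ^ (1 - b))
      (ρ t * (1 - b) * (1 - cdf ρ t) ^ (-b)) t := by
    intro t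
    have := (((cdf_hasDerivAt hc hi t).const_sub 1).rpow_const (p := 1 - b)
      (Or.inl (hcl t).ne')).neg
    rw [show 1 - b - 1 = -b by ring, neg_mul, neg_mul, neg_neg] at this
    exact this
  have hprim : ∀ {f f' : ℝ → ℝ} {l₁ l₂ : ℝ}, (∀ t, HasDerivAt f (f' t) t) → (∀ t, 0 ≤ f' t) →
      Tendsto f atBot (𝓝 l₁) → Tendsto f atTop (𝓝 l₂) → Integrable f' := by
    intro f f' l₁ l₂ hf hf' hl1 hl2
    have hA : IntegrableOn f' (Ioi 0) := integrableOn_Ioi_deriv_of_nonneg' (fun x _ => hf x)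
      (fun x _ => hf' x) hl2
    have hB : IntegrableOn (fun x => f' (-x)) (Ioi 0) := by
      refine integrableOn_Ioi_deriv_of_nonneg' (g := fun x => -f (-x)) (fun x _ => ?_)
        (fun x _ => hf' _) ((hl1.comp tendsto_neg_atTop_atBot).neg)
      have := ((hf (-x)).comp x (hasDerivAt_neg x)).neg
      rw [mul_neg_one, neg_neg] at this
      exact this
    have hB' : IntegrableOn f' (Iic 0) := by
      rw [integrableOn_Iic_iff_integrableOn_Iio]
      refine ((Measure.measurePreserving_neg (volume : Measure ℝ)).integrableOn_comp_preimage
        (MeasurableEquiv.neg ℝ).measurableEmbedding).1 ?_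
      have hpre : (Neg.neg : ℝ → ℝ) ⁻¹' Iio 0 = Ioi 0 := by ext x; simp
      rw [hpre]
      exact hB
    rw [← integrableOn_univ, ← Iic_union_Ioi (a := (0 : ℝ))]
    exact hB'.union hA
  have hrc : ∀ {l : Filter ℝ} {f : ℝ → ℝ} {z : ℝ}, Tendsto f l (𝓝 z) →
      Tendsto (fun t => f t ^ (1 - b)) l (𝓝 (z ^ (1 - b))) := fun h =>
    h.rpow_const (Or.inr hb'.le)
  have i1 := hprim hd1 (fun t => by have := hpos t; have := hcp t; positivity)
    (hrc (cdf_tendsto_atBot hi h1)) (hrc (cdf_tendsto_atTop hi h1))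
  have i2 := hprim hd2 (fun t => by have := hpos t; have := hcl t; positivity)
    (hrc ((cdf_tendsto_atBot hi h1).const_sub 1)).neg
    (hrc ((cdf_tendsto_atTop hi h1).const_sub 1)).neg
  refine ((i1.add i2).const_mul (1 - b)⁻¹).mono' ?_ (Eventually.of_forall fun t => ?_)
  · exact ((mw_rpow_continuous hc hpos hi h1 _).mul hc).aestronglyMeasurable
  · have e : (1 - b)⁻¹ * (ρ t * (1 - b) * cdf ρ t ^ (-b) + ρ t * (1 - b) * (1 - cdf ρ t) ^ (-b)) =
        (cdf ρ t ^ (-b) + (1 - cdf ρ t) ^ (-b)) * ρ t := by field_simp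
    have hm := mw_pos hc hpos hi h1 t
    have hρ := hpos t
    have p1 : 0 ≤ cdf ρ t ^ (-b) := Real.rpow_nonneg (hcp t).le _
    have p2 : 0 ≤ (1 - cdf ρ t) ^ (-b) := Real.rpow_nonneg (hcl t).le _
    rw [Real.norm_of_nonneg (by positivity), Pi.add_apply, e]
    refine mul_le_mul_of_nonneg_right ?_ hρ.le
    rcases min_choice (cdf ρ t) (1 - cdf ρ t) with h | h
    · rw [mw, h]; linarith
    · rw [mw, h]; linarith

lemma mw_tail {f : ℝ → ℝ} (hc : Continuous ρ) (hpos : ∀ t, 0 < ρ t) (hi : Integrable ρ)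
    (h1 : ∫ t : ℝ, ρ t = 1) {a : ℝ}
    (ht : Tendsto (fun x => f x / (1 - cdf ρ x) ^ a) atTop (𝓝 0))
    (hb : Tendsto (fun x => f x / (cdf ρ x) ^ a) atBot (𝓝 0)) :
    Tendsto (fun t => |f t| * mw ρ t ^ (-a)) (cocompact ℝ) (𝓝 0) := by
  have hcp := cdf_pos hc hpos hi
  have hcl : ∀ t, 0 < 1 - cdf ρ t := fun t => by linarith [cdf_lt_one hc hpos hi h1 t]
  rw [cocompact_eq_atBot_atTop, tendsto_sup]
  have hform : ∀ t, ∀ z : ℝ, 0 < z → mw ρ t = z → |f t| * mw ρ t ^ (-a) = |f t / z ^ a| := by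
    intro t z hz h
    rw [h, abs_div, Real.rpow_neg hz.le, abs_of_pos (Real.rpow_pos_of_pos hz a), div_eq_mul_inv]
  constructor
  · have := hb.abs
    rw [abs_zero] at this
    refine this.congr' ?_
    filter_upwards [(cdf_tendsto_atBot hi h1).eventually_lt_const (show (0 : ℝ) < 1 / 2 by norm_num)]
      with t ht
    exact (hform t _ (hcp t) (min_eq_left (by linarith))).symm
  · have := ht.abs
    rw [abs_zero] at this
    refine this.congr' ?_
    filter_upwards [(cdf_tendsto_atTop hi h1).eventually_const_lt (show (1 / 2 : ℝ) < 1 by norm_num)]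
      with t ht
    exact (hform t _ (hcl t) (min_eq_right (by linarith))).symm

/-- The quantile function is differentiable on `(0,1)` with derivative `1 / ρ ∘ Φ⁻¹`. -/
lemma quantile_hasDerivAt (hc : Continuous ρ) (hpos : ∀ t, 0 < ρ t) (hi : Integrable ρ)
    {Finv : ℝ → ℝ} (hF : ∀ u ∈ Ioo (0 : ℝ) 1, cdf ρ (Finv u) = u) {u : ℝ}
    (hu : u ∈ Ioo (0 : ℝ) 1) : HasDerivAt Finv (1 / ρ (Finv u)) u := by
  have hmono := cdf_strictMono hc hpos hi
  have hnhds : Ioo (0 : ℝ) 1 ∈ 𝓝 u := isOpen_Ioo.mem_nhds hu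
  have hcont : ContinuousAt Finv u := by
    refine tendsto_order.2 ⟨fun a ha => ?_, fun a ha => ?_⟩
    · have : cdf ρ a < u := by rw [← hF u hu]; exact hmono ha
      filter_upwards [hnhds, eventually_gt_nhds this] with v hv hv2
      rw [← hmono.lt_iff_lt, hF v hv]; exact hv2
    · have : u < cdf ρ a := by rw [← hF u hu]; exact hmono ha
      filter_upwards [hnhds, eventually_lt_nhds this] with v hv hv2
      rw [← hmono.lt_iff_lt, hF v hv]; exact hv2
  rw [one_div]
  exact HasDerivAt.of_local_left_inverse hcont (cdf_hasDerivAt hc hi _) (hpos _).ne'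
    (by filter_upwards [hnhds] with v hv using hF v hv)

end CDF

/-! ### Rules for iterated partial derivatives -/

section Derivatives

variable {ι : Type} [Fintype ι] [DecidableEq ι]

lemma contDiff_pD {g : (ι → ℝ) → ℝ} {p : ℕ} (hg : ContDiff ℝ ((p + 1 : ℕ) : ℕ∞) g) (i : ι) :
    ContDiff ℝ (p : ℕ∞) (pD i g) := by
  have h : ContDiff ℝ (p : ℕ∞) (fderiv ℝ g) := by
    refine hg.fderiv_right ?_
    norm_cast
  exact h.clm_apply contDiff_const

lemma contDiff_foldr {g : (ι → ℝ) → ℝ} {r : ℕ} (hg : ContDiff ℝ (r : ℕ∞) g) :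
    ∀ (l : List ι) (p : ℕ), l.length + p ≤ r → ContDiff ℝ (p : ℕ∞) (l.foldr pD g)
  | [], p, h => hg.of_le (by
      have : p ≤ r := by simpa using h
      exact_mod_cast this)
  | i :: l, p, h => contDiff_pD (contDiff_foldr hg l (p + 1) (by simp at h; omega)) i

lemma contDiff_one_of_nat {ι : Type} [Fintype ι] {g : (ι → ℝ) → ℝ} {p : ℕ} (hg : ContDiff ℝ (p : ℕ∞) g) (hp : 1 ≤ p) :
    ContDiff ℝ 1 g := hg.of_le (by exact_mod_cast hp)

lemma pD_comm {g : (ι → ℝ) → ℝ} (hg : ContDiff ℝ ((2 : ℕ) : ℕ∞) g) (i k : ι) :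
    pD i (pD k g) = pD k (pD i g) := by
  ext x
  have hd : DifferentiableAt ℝ (fderiv ℝ g) x :=
    (hg.fderiv_right (m := 1) (by norm_num)).differentiable (by norm_num) x
  have key : ∀ a b : ι, pD a (pD b g) x =
      fderiv ℝ (fderiv ℝ g) x (Pi.single a 1) (Pi.single b 1) := by
    intro a b
    have : HasFDerivAt (pD b g)
        ((ContinuousLinearMap.apply ℝ ℝ (Pi.single b (1 : ℝ) : ι → ℝ)).comp
          (fderiv ℝ (fderiv ℝ g) x)) x :=
      (ContinuousLinearMap.apply ℝ ℝ (Pi.single b (1 : ℝ) : ι → ℝ)).hasFDerivAt.comp x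
        hd.hasFDerivAt
    rw [pD, this.fderiv]; simp
  rw [key, key]
  have hsym : IsSymmSndFDerivAt ℝ g x :=
    hg.contDiffAt.isSymmSndFDerivAt (by simp)
  exact hsym _ _

/-- Iterated partial derivatives of total order at most `r` do not depend on the order of
differentiation. -/
lemma foldr_pD_perm {g : (ι → ℝ) → ℝ} {r : ℕ} (hg : ContDiff ℝ (r : ℕ∞) g) {l l' : List ι}
    (h : l.Perm l') : l.length ≤ r → l.foldr pD g = l'.foldr pD g := by
  induction h with
  | nil => intro _; rfl
  | cons a _ ih => intro hl; simp only [List.foldr_cons]; rw [ih (by simp at hl; omega)]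
  | swap a b l =>
    intro hl
    simp only [List.foldr_cons]
    exact pD_comm (contDiff_foldr hg l 2 (by simp at hl; omega)) _ _
  | trans h1 _ ih1 ih2 => intro hl; rw [ih1 hl, ih2 (h1.length_eq ▸ hl)]

lemma count_flatMap_replicate (α : ι → ℕ) (a : ι) :
    (((Finset.univ : Finset ι).toList).flatMap (fun i => List.replicate (α i) i)).count a = α a := by
  rw [List.count_flatMap]
  have : (List.map (List.count a ∘ fun i => List.replicate (α i) i)
      (Finset.univ : Finset ι).toList).sum = ∑ i : ι, (if i = a then α i else 0) := by
    rw [← Finset.sum_map_toList]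
    congr 2
    ext i
    simp [List.count_replicate]
  rw [this]; simp

lemma foldr_pD_eq_mD {g : (ι → ℝ) → ℝ} {r : ℕ} (hg : ContDiff ℝ (r : ℕ∞) g) (l : List ι)
    (hl : l.length ≤ r) : l.foldr pD g = mD (fun i => l.count i) g := by
  refine foldr_pD_perm hg ?_ hl
  rw [List.perm_iff_count]
  intro a
  rw [count_flatMap_replicate]

lemma sum_count_eq_length (l : List ι) : ∑ i, l.count i = l.length := by
  simpa using Multiset.sum_count_eq_card (s := Finset.univ) (m := (l : Multiset ι)) (by simp)

lemma pD_const (i : ι) (c : ℝ) : pD i (fun _ : ι → ℝ => c) = fun _ => 0 := by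
  ext x; simp [pD]

lemma pD_add {f g : (ι → ℝ) → ℝ} (hf : Differentiable ℝ f) (hg : Differentiable ℝ g) (i : ι) :
    pD i (fun x => f x + g x) = fun x => pD i f x + pD i g x := by
  ext x
  have := ((hf x).hasFDerivAt.add (hg x).hasFDerivAt).fderiv
  simp only [pD]
  rw [show (fun x => f x + g x) = f + g from rfl, this]; simp

lemma pD_mul {f g : (ι → ℝ) → ℝ} (hf : Differentiable ℝ f) (hg : Differentiable ℝ g) (i : ι) :
    pD i (fun x => f x * g x) = fun x => pD i f x * g x + f x * pD i g x := by
  ext x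
  have := ((hf x).hasFDerivAt.mul (hg x).hasFDerivAt).fderiv
  simp only [pD]
  rw [show (fun x => f x * g x) = f * g from rfl, this]; simp; ring

lemma pD_inv_pow {f : (ι → ℝ) → ℝ} (hf : Differentiable ℝ f) (h0 : ∀ x, f x ≠ 0) (b : ℕ) (i : ι) :
    pD i (fun x => (f x)⁻¹ ^ b) = fun x => -(b : ℝ) * (f x)⁻¹ ^ (b + 1) * pD i f x := by
  ext x
  have h1 : HasDerivAt (fun t : ℝ => t⁻¹ ^ b) (-(b : ℝ) * (f x)⁻¹ ^ (b + 1)) (f x) := by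
    have := (hasDerivAt_inv (h0 x)).pow b
    refine this.congr_deriv ?_
    rcases b with _ | b
    · simp
    · simp only [Nat.add_sub_cancel, pow_succ]
      field_simp
  have h2 := h1.comp_hasFDerivAt x (hf x).hasFDerivAt
  rw [pD, show (fun x => (f x)⁻¹ ^ b) = (fun t : ℝ => t⁻¹ ^ b) ∘ f from rfl, h2.fderiv]
  simp [pD]

lemma pD_coord {R : ℝ → ℝ} (hR : Differentiable ℝ R) (j i : ι) :
    pD i (fun x => R (x j)) = fun x => if i = j then deriv R (x j) else 0 := by
  ext x
  have h1 : HasFDerivAt (fun x : ι → ℝ => x j)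
    (ContinuousLinearMap.proj (R := ℝ) (φ := fun _ : ι => ℝ) j) x :=
    (ContinuousLinearMap.proj (R := ℝ) (φ := fun _ : ι => ℝ) j).hasFDerivAt
  have h2 := ((hR (x j)).hasDerivAt).comp_hasFDerivAt x h1
  rw [pD, show (fun x : ι → ℝ => R (x j)) = R ∘ fun x => x j from rfl, h2.fderiv]
  simp [Pi.single_apply, eq_comm]

end Derivatives

/-! ### Growth classes of boundary terms -/

section Classes

/-- `PolyCls g φ m w A`: the function `A` is a polynomial expression, of degree at most `w`, in
partial derivatives of `g` and `φ` of order at most `m`. -/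
inductive PolyCls {ι : Type} [Fintype ι] [DecidableEq ι] (g φ : (ι → ℝ) → ℝ) (m : ℕ) :
    ℕ → ((ι → ℝ) → ℝ) → Prop
  | const (w : ℕ) (c : ℝ) : PolyCls g φ m w (fun _ => c)
  | dg (w : ℕ) (l : List ι) : l.length ≤ m → PolyCls g φ m (w + 1) (l.foldr pD g)
  | dφ (w : ℕ) (l : List ι) : l.length ≤ m → PolyCls g φ m (w + 1) (l.foldr pD φ)
  | mul {w w' : ℕ} {A A' : (ι → ℝ) → ℝ} : PolyCls g φ m w A → PolyCls g φ m w' A' →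
      PolyCls g φ m (w + w') (fun x => A x * A' x)
  | add {w : ℕ} {A A' : (ι → ℝ) → ℝ} : PolyCls g φ m w A → PolyCls g φ m w A' →
      PolyCls g φ m w (fun x => A x + A' x)

variable {ι : Type} [Fintype ι] [DecidableEq ι] {g φ : (ι → ℝ) → ℝ} {r : ℕ}

lemma PolyCls.mono {m w : ℕ} {A : (ι → ℝ) → ℝ} (h : PolyCls g φ m w A) :
    ∀ {m' w' : ℕ}, m ≤ m' → w ≤ w' → PolyCls g φ m' w' A := by
  induction h with
  | const w c => intro m' w' _ _; exact .const _ _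
  | dg w l hl =>
    intro m' w' h1 h2
    obtain ⟨k, rfl⟩ : ∃ k, w' = k + 1 := ⟨w' - 1, by omega⟩
    exact .dg _ _ (hl.trans h1)
  | dφ w l hl =>
    intro m' w' h1 h2
    obtain ⟨k, rfl⟩ : ∃ k, w' = k + 1 := ⟨w' - 1, by omega⟩
    exact .dφ _ _ (hl.trans h1)
  | @mul w1 w2 A A' _ _ ih ih' =>
    intro m' w' h1 h2
    have h := (ih h1 le_rfl).mul (ih' (w' := w' - w1) h1 (by omega))
    rwa [show w1 + (w' - w1) = w' by omega] at h
  | add _ _ ih ih' => intro m' w' h1 h2; exact (ih h1 h2).add (ih' h1 h2)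

lemma PolyCls.contDiff (hg : ContDiff ℝ (r : ℕ∞) g) (hφ : ContDiff ℝ (r : ℕ∞) φ)
    {m w p : ℕ} {A : (ι → ℝ) → ℝ} (h : PolyCls g φ m w A) (hp : m + p ≤ r) :
    ContDiff ℝ (p : ℕ∞) A := by
  induction h with
  | const w c => exact contDiff_const
  | dg w l hl => exact contDiff_foldr hg l p (by omega)
  | dφ w l hl => exact contDiff_foldr hφ l p (by omega)
  | mul _ _ ih ih' => exact ih.mul ih'
  | add _ _ ih ih' => exact ih.add ih'

lemma PolyCls.differentiable (hg : ContDiff ℝ (r : ℕ∞) g) (hφ : ContDiff ℝ (r : ℕ∞) φ)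
    {m w : ℕ} {A : (ι → ℝ) → ℝ} (h : PolyCls g φ m w A) (hp : m + 1 ≤ r) :
    Differentiable ℝ A :=
  (contDiff_one_of_nat (h.contDiff hg hφ hp) le_rfl).differentiable (by norm_num)

lemma PolyCls.pD (hg : ContDiff ℝ (r : ℕ∞) g) (hφ : ContDiff ℝ (r : ℕ∞) φ)
    {m w : ℕ} {A : (ι → ℝ) → ℝ} (h : PolyCls g φ m w A) (hm : m + 1 ≤ r) (k : ι) :
    PolyCls g φ (m + 1) w (pD k A) := by
  induction h with
  | const w c => rw [pD_const]; exact .const _ _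
  | dg w l hl => exact .dg _ (k :: l) (by simpa using hl)
  | dφ w l hl => exact .dφ _ (k :: l) (by simpa using hl)
  | mul h h' ih ih' =>
    rw [pD_mul (h.differentiable hg hφ hm) (h'.differentiable hg hφ hm)]
    exact (ih.mul (h'.mono (Nat.le_succ _) le_rfl)).add
      ((h.mono (Nat.le_succ _) le_rfl).mul ih')
  | add h h' ih ih' =>
    rw [pD_add (h.differentiable hg hφ hm) (h'.differentiable hg hφ hm)]
    exact ih.add ih'

lemma PolyCls.bound {W : (ι → ℝ) → ℝ} {L : ℝ} (hW : ∀ x, 1 ≤ W x) (hL : 0 < L)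
    (hbg : ∀ l : List ι, l.length ≤ r → ∀ x, |l.foldr _root_.pD g x| ≤ L * W x)
    (hbφ : ∀ l : List ι, l.length ≤ r → ∀ x, |l.foldr _root_.pD φ x| ≤ L * W x)
    {m w : ℕ} {A : (ι → ℝ) → ℝ} (h : PolyCls g φ m w A) (hm : m ≤ r) :
    ∃ C, 0 ≤ C ∧ ∀ x, |A x| ≤ C * W x ^ w := by
  have hle : ∀ (w : ℕ) x, L * W x ≤ L * W x ^ (w + 1) := fun w x =>
    mul_le_mul_of_nonneg_left (le_self_pow₀ (hW x) (by omega)) hL.le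
  induction h with
  | const w c =>
    exact ⟨|c|, abs_nonneg _, fun x => le_mul_of_one_le_right (abs_nonneg _)
      (one_le_pow₀ (hW x))⟩
  | dg w l hl => exact ⟨L, hL.le, fun x => (hbg l (hl.trans hm) x).trans (hle w x)⟩
  | dφ w l hl => exact ⟨L, hL.le, fun x => (hbφ l (hl.trans hm) x).trans (hle w x)⟩
  | mul _ _ ih ih' =>
    obtain ⟨C, hC, h⟩ := ih
    obtain ⟨C', hC', h'⟩ := ih'
    refine ⟨C * C', mul_nonneg hC hC', fun x => ?_⟩
    rw [abs_mul, pow_add, mul_mul_mul_comm]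
    exact mul_le_mul (h x) (h' x) (abs_nonneg _)
      (mul_nonneg hC (pow_nonneg (zero_le_one.trans (hW x)) _))
  | add _ _ ih ih' =>
    obtain ⟨C, hC, h⟩ := ih
    obtain ⟨C', hC', h'⟩ := ih'
    refine ⟨C + C', add_nonneg hC hC', fun x => ?_⟩
    rw [add_mul]
    exact (abs_add_le _ _).trans (add_le_add (h x) (h' x))

/-- `BdCls g φ ρ j n H`: the function `H` is a sum of terms `A · (D_jφ)^{-b} · ρ^{(c)}(x_j)`, where
`A` has degree at most `2n` in derivatives of order at most `n`, and `1 ≤ b ≤ 2n - 1`,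
`c ≤ n - 1`.  These are the boundary terms produced by differentiating `P_j f` exactly `n`
times. -/
inductive BdCls {ι : Type} [Fintype ι] [DecidableEq ι] (g φ : (ι → ℝ) → ℝ) (ρ : ℝ → ℝ) (j : ι)
    (n : ℕ) : ((ι → ℝ) → ℝ) → Prop
  | zero : BdCls g φ ρ j n (fun _ => 0)
  | mon {b c : ℕ} {A : (ι → ℝ) → ℝ} : PolyCls g φ n (2 * n) A → 1 ≤ b → b + 1 ≤ 2 * n →
      c + 1 ≤ n →
      BdCls g φ ρ j n (fun x => A x * (pD j φ x)⁻¹ ^ b * iteratedDeriv c ρ (x j))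
  | add {H K : (ι → ℝ) → ℝ} : BdCls g φ ρ j n H → BdCls g φ ρ j n K →
      BdCls g φ ρ j n (fun x => H x + K x)

variable {ρ : ℝ → ℝ} {j : ι}

lemma differentiable_iteratedDeriv_of (hρ : ContDiff ℝ ((r - 1 : ℕ) : ℕ∞) ρ) {c : ℕ}
    (hc : c + 1 ≤ r - 1) : Differentiable ℝ (iteratedDeriv c ρ) := by
  refine hρ.differentiable_iteratedDeriv c ?_
  exact_mod_cast (by omega : c < r - 1)

lemma differentiable_pD_of (hφ : ContDiff ℝ (r : ℕ∞) φ) (hr : 2 ≤ r) (k : ι) :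
    Differentiable ℝ (pD k φ) :=
  (contDiff_one_of_nat (contDiff_foldr hφ [k] 1 (by simp; omega)) le_rfl).differentiable
    (by norm_num)

lemma differentiable_inv_pow {ι : Type} [Fintype ι] {P : (ι → ℝ) → ℝ} (hP : Differentiable ℝ P) (h0 : ∀ x, P x ≠ 0)
    (b : ℕ) : Differentiable ℝ (fun x => (P x)⁻¹ ^ b) :=
  (hP.inv h0).pow b

lemma differentiable_coord {ι : Type} [Fintype ι] {R : ℝ → ℝ} (hR : Differentiable ℝ R) (j : ι) :
    Differentiable ℝ (fun x : ι → ℝ => R (x j)) :=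
  hR.comp (differentiable_apply j)

lemma BdCls.differentiable (hg : ContDiff ℝ (r : ℕ∞) g) (hφ : ContDiff ℝ (r : ℕ∞) φ)
    (hρ : ContDiff ℝ ((r - 1 : ℕ) : ℕ∞) ρ) (h0 : ∀ x, pD j φ x ≠ 0)
    {n : ℕ} {H : (ι → ℝ) → ℝ} (h : BdCls g φ ρ j n H) (hn : n + 1 ≤ r) :
    Differentiable ℝ H := by
  induction h with
  | zero => exact differentiable_const _
  | mon hA hb hb' hc =>
    exact ((hA.differentiable hg hφ hn).mul (differentiable_inv_pow
      (differentiable_pD_of hφ (by omega) j) h0 _)).mul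
      (differentiable_coord (differentiable_iteratedDeriv_of hρ (by omega)) j)
  | add _ _ ih ih' => exact ih.add ih'

lemma BdCls.congr {n : ℕ} {H K : (ι → ℝ) → ℝ} (h : BdCls g φ ρ j n H) (hK : ∀ x, K x = H x) :
    BdCls g φ ρ j n K := by
  rwa [show K = H from funext hK]

/-- The tangential derivative along the zero set of `φ` raises the order of a boundary term by
one. -/
lemma BdCls.tang {d : ℕ} {g φ : (Fin d → ℝ) → ℝ} {j : Fin d}
    (hg : ContDiff ℝ (r : ℕ∞) g) (hφ : ContDiff ℝ (r : ℕ∞) φ)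
    (hρ : ContDiff ℝ ((r - 1 : ℕ) : ℕ∞) ρ) (h0 : ∀ x, _root_.pD j φ x ≠ 0)
    {n : ℕ} {H : (Fin d → ℝ) → ℝ} (h : BdCls g φ ρ j n H) (hn : n + 1 ≤ r)
    {k : Fin d} (hk : k ≠ j) : BdCls g φ ρ j (n + 1) (tang j φ k H) := by
  induction h with
  | zero =>
    refine BdCls.zero.congr fun x => ?_
    simp [_root_.tang, pD_const]
  | @mon b c A hA hb hb' hc =>
    have hAd := hA.differentiable hg hφ hn
    have hP := differentiable_pD_of hφ (by omega : 2 ≤ r) j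
    have hPb := differentiable_inv_pow hP h0 b
    have hR := differentiable_iteratedDeriv_of hρ (show c + 1 ≤ r - 1 by omega)
    have hRj := differentiable_coord hR j
    have hA' : PolyCls g φ (n + 1) (2 * n) A := hA.mono (Nat.le_succ _) le_rfl
    have hDφ : ∀ i, PolyCls g φ (n + 1) 1 (pD i φ) := fun i => .dφ 0 [i] (by simp)
    have hDP : ∀ i, PolyCls g φ (n + 1) 1 (pD i (pD j φ)) :=
      fun i => .dφ 0 [i, j] (by simp; omega)
    have hc0 : ∀ c : ℝ, PolyCls g φ (n + 1) 0 (fun _ => c) := fun c => .const _ c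
    have t1 : BdCls g φ ρ j (n + 1) _ :=
      .mon (b := b) (c := c) ((hA.pD hg hφ hn k).mono le_rfl (by omega)) hb (by omega) (by omega)
    have t2 : BdCls g φ ρ j (n + 1) _ :=
      .mon (b := b + 1) (c := c) (((hc0 (-b)).mul (hA'.mul (hDP k))).mono le_rfl (by omega))
        (by omega) (by omega) (by omega)
    have t3 : BdCls g φ ρ j (n + 1) _ :=
      .mon (b := b + 1) (c := c)
        (((hc0 (-1)).mul ((hA.pD hg hφ hn j).mul (hDφ k))).mono le_rfl (by omega))
        (by omega) (by omega) (by omega)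
    have t4 : BdCls g φ ρ j (n + 1) _ :=
      .mon (b := b + 2) (c := c)
        (((hc0 b).mul ((hA'.mul (hDP j)).mul (hDφ k))).mono le_rfl (by omega))
        (by omega) (by omega) (by omega)
    have t5 : BdCls g φ ρ j (n + 1) _ :=
      .mon (b := b + 1) (c := c + 1)
        (((hc0 (-1)).mul (hA'.mul (hDφ k))).mono le_rfl (by omega))
        (by omega) (by omega) (by omega)
    refine ((((t1.add t2).add t3).add t4).add t5).congr fun x => ?_
    have hD : ∀ i, pD i (fun x => A x * (pD j φ x)⁻¹ ^ b * iteratedDeriv c ρ (x j)) x =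
        (pD i A x * (pD j φ x)⁻¹ ^ b + A x * (-(b : ℝ) * (pD j φ x)⁻¹ ^ (b + 1) *
          pD i (pD j φ) x)) * iteratedDeriv c ρ (x j) +
        A x * (pD j φ x)⁻¹ ^ b * (if i = j then iteratedDeriv (c + 1) ρ (x j) else 0) := by
      intro i
      rw [pD_mul (f := fun x => A x * (pD j φ x)⁻¹ ^ b) (hAd.mul hPb) hRj, pD_mul hAd hPb, pD_inv_pow hP h0, pD_coord hR,
        iteratedDeriv_succ]
    simp only [_root_.tang, hD, if_neg hk, if_true]
    ring
  | @add H K h h' ih ih' =>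
    refine BdCls.congr (ih.add ih') fun x => ?_
    have h1 := h.differentiable hg hφ hρ h0 hn
    have h2 := h'.differentiable hg hφ hρ h0 hn
    simp only [_root_.tang, pD_add h1 h2]
    ring

/-- Degree `2n` for the polynomial part and one more for the power of `(D_jφ)⁻¹`, whatever its
exponent, give the total weight `2n + 1`. -/
lemma BdCls.bound {W : (ι → ℝ) → ℝ} {L : ℝ} (hW : ∀ x, 1 ≤ W x) (hL : 0 < L)
    (hbg : ∀ l : List ι, l.length ≤ r → ∀ x, |l.foldr _root_.pD g x| ≤ L * W x)
    (hbφ : ∀ l : List ι, l.length ≤ r → ∀ x, |l.foldr _root_.pD φ x| ≤ L * W x)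
    (hbD : ∀ b : ℕ, 1 ≤ b → b ≤ 2 * r - 1 → ∀ x, |pD j φ x|⁻¹ ^ b ≤ L * W x)
    {n N : ℕ} {H : (ι → ℝ) → ℝ} (h : BdCls g φ ρ j n H) (hn : n ≤ r) (hN : 2 * n + 1 ≤ N) :
    ∃ C, 0 ≤ C ∧ ∀ x, |H x| ≤
      C * ((∑ c ∈ Finset.range r, |iteratedDeriv c ρ (x j)|) * W x ^ N) := by
  induction h with
  | zero =>
    exact ⟨0, le_rfl, fun x => by simp⟩
  | @mon b c A hA hb hb' hc =>
    obtain ⟨C, hC, h⟩ := hA.bound hW hL hbg hbφ hn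
    refine ⟨C * L, by positivity, fun x => ?_⟩
    have hWx := zero_le_one.trans (hW x)
    have h1 : |(pD j φ x)⁻¹ ^ b| ≤ L * W x := by
      rw [abs_pow, abs_inv]; exact hbD b hb (by omega) x
    have h2 : |iteratedDeriv c ρ (x j)| ≤ ∑ c ∈ Finset.range r, |iteratedDeriv c ρ (x j)| :=
      Finset.single_le_sum (f := fun c => |iteratedDeriv c ρ (x j)|) (fun _ _ => abs_nonneg _)
        (Finset.mem_range.2 (by omega))
    rw [abs_mul, abs_mul]
    calc |A x| * |(pD j φ x)⁻¹ ^ b| * |iteratedDeriv c ρ (x j)|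
        ≤ (C * W x ^ (2 * n)) * (L * W x) *
            ∑ c ∈ Finset.range r, |iteratedDeriv c ρ (x j)| := by
          gcongr
          exact h x
      _ = C * L * ((∑ c ∈ Finset.range r, |iteratedDeriv c ρ (x j)|) * W x ^ (2 * n + 1)) := by
          ring
      _ ≤ _ := by
          have : W x ^ (2 * n + 1) ≤ W x ^ N := pow_le_pow_right₀ (hW x) hN
          have h0 : 0 ≤ ∑ c ∈ Finset.range r, |iteratedDeriv c ρ (x j)| := (abs_nonneg _).trans h2
          gcongr
  | add _ _ ih ih' =>
    obtain ⟨C, hC, h⟩ := ih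
    obtain ⟨C', hC', h'⟩ := ih'
    refine ⟨C + C', add_nonneg hC hC', fun x => ?_⟩
    rw [add_mul]
    exact (abs_add_le _ _).trans (add_le_add (h x) (h' x))

end Classes

/-! ### Iterated derivatives of `P_j f` -/

section Iterated

variable {d : ℕ} {j : Fin d}

/-- Hypotheses for the iterated differentiation of `P_j f`, with the growth weight in factored form:
`a` is the factor belonging to the integrated variable `x_j`, `β` the product of the others. -/
structure GrowthData (r : ℕ) (j : Fin d) (g φ : (Fin d → ℝ) → ℝ) (ρ : ℝ → ℝ) (s L : ℝ)
    (a : ℝ → ℝ) (β : ({i : Fin d // i ≠ j} → ℝ) → ℝ) (W : (Fin d → ℝ) → ℝ) : Prop where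
  one_le_r : 1 ≤ r
  le_r : d - 1 ≤ r
  hg : ContDiff ℝ (r : ℕ∞) g
  hφ : ContDiff ℝ (r : ℕ∞) φ
  hρ : ContDiff ℝ ((r - 1 : ℕ) : ℕ∞) ρ
  ρ_nonneg : ∀ t, 0 ≤ ρ t
  s_eq : s = 1 ∨ s = -1
  s_pos : ∀ x, 0 < s * pD j φ x
  L_pos : 0 < L
  a_cont : Continuous a
  β_cont : Continuous β
  one_le_a : ∀ t, 1 ≤ a t
  one_le_β : ∀ y, 1 ≤ β y
  W_eq : ∀ t y, W (insj j t y) = a t * β y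
  bg : ∀ l : List (Fin d), l.length ≤ r → ∀ x, |l.foldr pD g x| ≤ L * W x
  bφ : ∀ l : List (Fin d), l.length ≤ r → ∀ x, |l.foldr pD φ x| ≤ L * W x
  bD : ∀ b : ℕ, 1 ≤ b → b ≤ 2 * r - 1 → ∀ x, |pD j φ x|⁻¹ ^ b ≤ L * W x
  aρ_int : Integrable fun t => a t * ρ t
  tail : ∀ c : ℕ, c ≤ r - 1 →
    Tendsto (fun t => |iteratedDeriv c ρ t| * a t ^ (2 * d - 1)) (cocompact ℝ) (𝓝 0)

lemma insj_eta (j : Fin d) (x : Fin d → ℝ) : insj j (x j) (fun k => x k.1) = x := by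
  ext i
  by_cases h : i = j
  · subst h; simp [insj]
  · simp [insj, h]

lemma bd_add {φ H K : (Fin d → ℝ) → ℝ} (y : {i : Fin d // i ≠ j} → ℝ) :
    bd j φ (fun x => H x + K x) y = bd j φ H y + bd j φ K y := by
  by_cases h : y ∈ zeroDom j φ
  · simp [bd_of_mem h]
  · simp [bd_of_notMem h]

namespace GrowthData

variable {r : ℕ} {g φ : (Fin d → ℝ) → ℝ} {ρ : ℝ → ℝ} {s L : ℝ}
  {a : ℝ → ℝ} {β : ({i : Fin d // i ≠ j} → ℝ) → ℝ} {W : (Fin d → ℝ) → ℝ}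

lemma one_le_W (S : GrowthData r j g φ ρ s L a β W) (x : Fin d → ℝ) : 1 ≤ W x := by
  rw [← insj_eta j x, S.W_eq]
  exact one_le_mul_of_one_le_of_one_le (S.one_le_a _) (S.one_le_β _)

lemma D_ne (S : GrowthData r j g φ ρ s L a β W) (x : Fin d → ℝ) : pD j φ x ≠ 0 := by
  intro h
  have := S.s_pos x
  simp [h] at this

lemma ρ_cont (S : GrowthData r j g φ ρ s L a β W) : Continuous ρ := S.hρ.continuous

/-- The factor that dominates all boundary terms as functions of `x_j` vanishes at infinity. -/
lemma tail_sum (S : GrowthData r j g φ ρ s L a β W) :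
    Tendsto (fun t => (∑ c ∈ Finset.range r, |iteratedDeriv c ρ t|) * a t ^ (2 * d - 1))
      (cocompact ℝ) (𝓝 0) := by
  simp only [Finset.sum_mul]
  rw [show (0 : ℝ) = ∑ c ∈ Finset.range r, 0 by simp]
  exact tendsto_finsetSum _ fun c hc => S.tail c (by have := Finset.mem_range.1 hc; omega)

lemma tail_bdd (S : GrowthData r j g φ ρ s L a β W) :
    ∃ M, 0 ≤ M ∧ ∀ t, (∑ c ∈ Finset.range r, |iteratedDeriv c ρ t|) * a t ^ (2 * d - 1) ≤ M := by
  set ω := fun t => (∑ c ∈ Finset.range r, |iteratedDeriv c ρ t|) * a t ^ (2 * d - 1) with hω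
  have hcont : Continuous ω := by
    refine (continuous_finsetSum _ fun c hc => ?_).mul (S.a_cont.pow _)
    refine (S.hρ.continuous_iteratedDeriv c ?_).abs
    have := Finset.mem_range.1 hc
    exact_mod_cast (by omega : c ≤ r - 1)
  have h1 : ∀ᶠ t in cocompact ℝ, ω t < 1 := S.tail_sum.eventually_lt_const one_pos
  obtain ⟨K, hK, hKt⟩ := mem_cocompact.1 h1
  obtain ⟨M, hM⟩ := (hK.image hcont).bddAbove
  refine ⟨max M 1, by positivity, fun t => ?_⟩
  by_cases ht : t ∈ K
  · exact (hM ⟨t, ht, rfl⟩).trans (le_max_left _ _)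
  · exact (le_of_lt (hKt ht)).trans (le_max_right _ _)

lemma bdCls_bound (S : GrowthData r j g φ ρ s L a β W) {n : ℕ} {H : (Fin d → ℝ) → ℝ}
    (h : BdCls g φ ρ j n H) (hn : n + 1 ≤ d) : ∃ C, 0 ≤ C ∧ ∀ t y, |H (insj j t y)| ≤
      ((∑ c ∈ Finset.range r, |iteratedDeriv c ρ t|) * a t ^ (2 * d - 1)) *
        (C * β y ^ (2 * d - 1)) := by
  have := S.le_r
  obtain ⟨C, hC, hb⟩ := h.bound (N := 2 * d - 1) S.one_le_W S.L_pos S.bg S.bφ S.bD (by omega)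
    (by omega)
  refine ⟨C, hC, fun t y => (hb _).trans (le_of_eq ?_)⟩
  rw [insj_self, S.W_eq, mul_pow]; ring

lemma bdCls_decay (S : GrowthData r j g φ ρ s L a β W) {n : ℕ} {H : (Fin d → ℝ) → ℝ}
    (h : BdCls g φ ρ j n H) (hn : n + 1 ≤ d) : Decay j H := by
  obtain ⟨C, _, hb⟩ := S.bdCls_bound h hn
  exact ⟨_, _, S.tail_sum, continuous_const.mul (S.β_cont.pow _), hb⟩

lemma intBound (S : GrowthData r j g φ ρ s L a β W) {l : List (Fin d)} (hl : l.length ≤ r) :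
    IntBound j ρ (fun t => a t * ρ t) (fun y => L * β y) (l.foldr pD g) := by
  intro t y
  have h := S.bg l hl (insj j t y)
  rw [S.W_eq] at h
  rw [abs_mul, abs_of_nonneg (S.ρ_nonneg t)]
  calc _ ≤ L * (a t * β y) * ρ t := mul_le_mul_of_nonneg_right h (S.ρ_nonneg t)
    _ = _ := by ring

/-- Decay of the first-order boundary term with the factor `G` frozen at `y₀`; three growth factors
occur, which is where `3 ≤ 2d - 1` is needed. -/
lemma decay_frozen (S : GrowthData r j g φ ρ s L a β W) {l : List (Fin d)} (hl : l.length ≤ r)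
    (hd : 2 ≤ d) (y₀ : {i : Fin d // i ≠ j} → ℝ) (m : Fin d) :
    Decay j fun x => s * (l.foldr pD g (insj j (x j) y₀) * ρ (x j) *
      (pD m φ x * (pD j φ x)⁻¹)) := by
  have hr := S.one_le_r
  refine ⟨_, fun y => L ^ 3 * β y₀ * β y ^ 2, S.tail_sum,
    continuous_const.mul (S.β_cont.pow _), fun t y => ?_⟩
  have h1 := S.bg l hl (insj j t y₀)
  have h2 := S.bφ [m] (by simpa using hr) (insj j t y)
  have h3 := S.bD 1 le_rfl (by omega) (insj j t y)
  rw [S.W_eq] at h1 h2 h3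
  simp only [List.foldr_cons, List.foldr_nil, pow_one] at h2 h3
  have ha := S.one_le_a t
  have hβ := S.one_le_β y
  have hβ0 := S.one_le_β y₀
  have hL := S.L_pos
  have h4 : ρ t ≤ ∑ c ∈ Finset.range r, |iteratedDeriv c ρ t| := by
    have := Finset.single_le_sum (f := fun c => |iteratedDeriv c ρ t|) (s := Finset.range r)
      (fun _ _ => abs_nonneg _) (Finset.mem_range.2 (show 0 < r by omega))
    refine le_trans ?_ this
    simpa using le_abs_self (ρ t)
  have h5 : a t ^ 3 ≤ a t ^ (2 * d - 1) := pow_le_pow_right₀ ha (by omega)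
  have hs : |s| = 1 := by rcases S.s_eq with h | h <;> simp [h]
  simp only [insj_self]
  rw [abs_mul, hs, one_mul, abs_mul, abs_mul, abs_mul, abs_inv, abs_of_nonneg (S.ρ_nonneg t)]
  have hρ := S.ρ_nonneg t
  calc _ ≤ (L * (a t * β y₀)) * ρ t * ((L * (a t * β y)) * (L * (a t * β y))) := by
        gcongr
    _ = (ρ t * a t ^ 3) * (L ^ 3 * β y₀ * β y ^ 2) := by ring
    _ ≤ _ := by
        have : 0 ≤ L ^ 3 * β y₀ * β y ^ 2 := by positivity
        gcongr

lemma contDiff_φ (S : GrowthData r j g φ ρ s L a β W) : ContDiff ℝ 1 φ :=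
  contDiff_one_of_nat S.hφ S.one_le_r

/-- One differentiation of an iterated derivative of `P_j f`: the volume part contributes a volume
term and a new boundary term, the boundary part its tangential derivative. -/
lemma step (S : GrowthData r j g φ ρ s L a β W) {l : List (Fin d)} {H : (Fin d → ℝ) → ℝ}
    (hl : l.length + 2 ≤ d) (hH : BdCls g φ ρ j l.length H) (y : {i : Fin d // i ≠ j} → ℝ) :
    HasFDerivAt (fun y => vol j φ ρ (l.foldr pD g) y + bd j φ H y)
      (gradL fun m => vol j φ ρ (pD m.1 (l.foldr pD g)) y +
        bd j φ (fun x => s * (l.foldr pD g x * ρ (x j) * (pD m.1 φ x * (pD j φ x)⁻¹)) +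
          tang j φ m.1 H x) y) y := by
  have hr := S.le_r
  have h1 := vol_hasFDerivAt (G := l.foldr pD g) S.contDiff_φ S.s_eq S.s_pos S.ρ_cont S.aρ_int
    (fun t => mul_nonneg (zero_le_one.trans (S.one_le_a t)) (S.ρ_nonneg t))
    (continuous_const.mul S.β_cont)
    (contDiff_one_of_nat (contDiff_foldr S.hg l 1 (by omega)) le_rfl)
    (S.intBound (by omega)) (fun m => S.intBound (l := m.1 :: l) (by simp; omega)) y
    (fun m => S.decay_frozen (by omega) (by omega) y m.1)
  have h2 := bd_hasFDerivAt S.contDiff_φ S.s_pos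
    (hH.differentiable S.hg S.hφ S.hρ S.D_ne (by omega)) (S.bdCls_decay hH (by omega))
    (fun k => S.bdCls_decay (hH.tang S.hg S.hφ S.hρ S.D_ne (by omega) k.2) (by omega)) y
  refine (h1.add h2).to_gradL fun k => ?_
  rw [_root_.add_apply, gradL_single, gradL_single, bd_add, add_assoc]

lemma step_cls (S : GrowthData r j g φ ρ s L a β W) {l : List (Fin d)} {H : (Fin d → ℝ) → ℝ}
    (hl : l.length + 2 ≤ d) (hH : BdCls g φ ρ j l.length H) (m : {i : Fin d // i ≠ j}) :
    BdCls g φ ρ j (l.length + 1) (fun x =>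
      s * (l.foldr pD g x * ρ (x j) * (pD m.1 φ x * (pD j φ x)⁻¹)) + tang j φ m.1 H x) := by
  have hr := S.le_r
  refine .add ?_ (hH.tang S.hg S.hφ S.hρ S.D_ne (by omega) m.2)
  have hA : PolyCls g φ (l.length + 1) (2 * (l.length + 1))
      (fun x => s * (l.foldr pD g x * pD m.1 φ x)) :=
    ((PolyCls.const 0 s).mul ((PolyCls.dg 0 l (by omega)).mul
      (PolyCls.dφ 0 [m.1] (by simp)))).mono le_rfl (by omega)
  refine (BdCls.mon (b := 1) (c := 0) hA le_rfl (by omega) (by omega)).congr fun x => ?_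
  simp only [iteratedDeriv_zero, pow_one]; ring

/-- The `n`-th order derivatives of `P_j f` are a volume term plus a boundary term in `BdCls n`. -/
lemma iterated (S : GrowthData r j g φ ρ s L a β W) :
    ∀ l : List {i : Fin d // i ≠ j}, l.length + 1 ≤ d →
      ∃ H, BdCls g φ ρ j l.length H ∧ l.foldr pD (vol j φ ρ g) = fun y =>
        vol j φ ρ ((l.map Subtype.val).foldr pD g) y + bd j φ H y
  | [], _ => ⟨_, .zero, by
      funext y
      by_cases h : y ∈ zeroDom j φ
      · simp [bd_of_mem h]
      · simp [bd_of_notMem h]⟩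
  | m :: l, hl => by
    have hl' : l.length + 2 ≤ d := by simp at hl; omega
    obtain ⟨H, hH, he⟩ := iterated S l (by omega)
    have hlen : (l.map Subtype.val).length = l.length := by simp
    rw [← hlen] at hH hl'
    have hcls := S.step_cls hl' hH m
    rw [hlen] at hcls
    refine ⟨_, hcls, ?_⟩
    rw [List.foldr_cons, he]
    funext y
    rw [(S.step hl' hH y).pD_eq m]
    rfl

lemma iterated_differentiable (S : GrowthData r j g φ ρ s L a β W)
    (l : List {i : Fin d // i ≠ j}) (hl : l.length + 2 ≤ d) :
    Differentiable ℝ (l.foldr pD (vol j φ ρ g)) := by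
  obtain ⟨H, hH, he⟩ := S.iterated l (by omega)
  have hlen : (l.map Subtype.val).length = l.length := by simp
  rw [← hlen] at hH hl
  rw [he]
  exact fun y => (S.step hl hH y).differentiableAt

lemma iterated_bound (S : GrowthData r j g φ ρ s L a β W)
    (l : List {i : Fin d // i ≠ j}) (hl : l.length + 1 ≤ d) :
    ∃ C, 0 ≤ C ∧ ∀ y, |l.foldr pD (vol j φ ρ g) y| ≤ C * β y ^ (2 * d - 1) := by
  obtain ⟨H, hH, he⟩ := S.iterated l (by omega)
  obtain ⟨C, hC, hb⟩ := S.bdCls_bound hH hl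
  obtain ⟨M, hM, hMb⟩ := S.tail_bdd
  have hr := S.le_r
  have hIB := S.intBound (l := l.map Subtype.val) (by simp; omega)
  have hI0 : 0 ≤ ∫ t, a t * ρ t := integral_nonneg fun t =>
    mul_nonneg (zero_le_one.trans (S.one_le_a t)) (S.ρ_nonneg t)
  have hL := S.L_pos
  refine ⟨L * (∫ t, a t * ρ t) + M * C, by positivity, fun y => ?_⟩
  have hβ := S.one_le_β y
  have hvol : |vol j φ ρ ((l.map Subtype.val).foldr pD g) y| ≤ (∫ t, a t * ρ t) * (L * β y) := by
    rw [vol, ← integral_mul_const, ← Real.norm_eq_abs]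
    refine norm_integral_le_of_norm_le (S.aρ_int.mul_const _) (Eventually.of_forall fun t => ?_)
    have h0 := hIB t y
    by_cases h : 0 ≤ φ (insj j t y)
    · simpa [h] using h0
    · simpa [h] using (abs_nonneg _).trans h0
  have hbd : |bd j φ H y| ≤ M * (C * β y ^ (2 * d - 1)) := by
    have hp : 0 ≤ C * β y ^ (2 * d - 1) := by positivity
    by_cases h : y ∈ zeroDom j φ
    · rw [bd_of_mem h]
      exact (hb _ _).trans (mul_le_mul_of_nonneg_right (hMb _) hp)
    · rw [bd_of_notMem h, abs_zero]; positivity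
  have hβN : β y ≤ β y ^ (2 * d - 1) := le_self_pow₀ hβ (by omega)
  rw [he]
  calc _ ≤ (∫ t, a t * ρ t) * (L * β y) + M * (C * β y ^ (2 * d - 1)) :=
        (abs_add_le _ _).trans (add_le_add hvol hbd)
    _ ≤ (∫ t, a t * ρ t) * (L * β y ^ (2 * d - 1)) + M * (C * β y ^ (2 * d - 1)) := by gcongr
    _ = _ := by ring

end GrowthData

end Iterated

/-! ### The quantile substitution -/

section ChainRule

variable {κ : Type} [Fintype κ] [DecidableEq κ]

lemma differentiableAt_map_prod {κ : Type} [Fintype κ] {h : ℝ → ℝ} (l : List κ) {u : κ → ℝ}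
    (hh : ∀ i ∈ l, DifferentiableAt ℝ h (u i)) :
    DifferentiableAt ℝ (fun w : κ → ℝ => (l.map fun i => h (w i)).prod) u := by
  induction l with
  | nil => simp
  | cons m l ih =>
    simp only [List.map_cons, List.prod_cons]
    have h1 : DifferentiableAt ℝ (fun w : κ → ℝ => h (w m)) u :=
      DifferentiableAt.comp u (hh m (by simp)) (differentiableAt_apply m u)
    exact h1.mul (ih fun i hi => hh i (by simp [hi]))

/-- A product over coordinates other than `m` has zero derivative in direction `m`. -/
lemma pD_map_prod {h : ℝ → ℝ} {l : List κ} {u : κ → ℝ} {m : κ} (hm : m ∉ l)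
    (hh : ∀ i ∈ l, DifferentiableAt ℝ h (u i)) :
    pD m (fun w : κ → ℝ => (l.map fun i => h (w i)).prod) u = 0 := by
  rw [pD, ← (differentiableAt_map_prod l hh).lineDeriv_eq_fderiv, lineDeriv]
  have : (fun t : ℝ => (l.map fun i => h ((u + t • (Pi.single m 1 : κ → ℝ)) i)).prod) =
      fun _ => (l.map fun i => h (u i)).prod := by
    funext t
    congr 1
    refine List.map_congr_left fun i hi => ?_
    have : i ≠ m := fun e => hm (e ▸ hi)
    simp [Pi.single_eq_of_ne this]
  rw [this, deriv_const]

/-- Mixed derivatives of `F` composed with a coordinatewise change of variables, where every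
coordinate is differentiated at most once. -/
lemma foldr_pD_comp {F : (κ → ℝ) → ℝ} {T h : ℝ → ℝ} {K : ℕ}
    (hT : ∀ t ∈ Ioo (0 : ℝ) 1, HasDerivAt T (h t) t)
    (hF : ∀ l : List κ, l.length < K → Differentiable ℝ (l.foldr pD F))
    (hh : 2 ≤ K → ∀ t ∈ Ioo (0 : ℝ) 1, DifferentiableAt ℝ h t) :
    ∀ l : List κ, l.Nodup → l.length ≤ K → ∀ u : κ → ℝ, (∀ i, u i ∈ Ioo (0 : ℝ) 1) →
      l.foldr pD (fun w => F fun i => T (w i)) u =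
        l.foldr pD F (fun i => T (u i)) * (l.map fun i => h (u i)).prod
  | [], _, _, u, _ => by simp
  | m :: l, hnd, hl, u, hu => by
    have hnd' := List.nodup_cons.1 hnd
    have hl' : l.length + 1 ≤ K := by simpa using hl
    have ih := foldr_pD_comp hT hF hh l hnd'.2 (by omega)
    have hopen : IsOpen {u : κ → ℝ | ∀ i, u i ∈ Ioo (0 : ℝ) 1} := by
      simp only [Set.ofPred_forall]
      exact isOpen_iInter_of_finite fun i => isOpen_Ioo.preimage (continuous_apply i)
    have hev : l.foldr pD (fun w => F fun i => T (w i)) =ᶠ[𝓝 u] fun u =>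
        l.foldr pD F (fun i => T (u i)) * (l.map fun i => h (u i)).prod := by
      filter_upwards [hopen.mem_nhds hu] with w hw using ih w hw
    have hhl : ∀ i ∈ l, DifferentiableAt ℝ h (u i) := by
      intro i hi
      have : 0 < l.length := List.length_pos_of_mem hi
      exact hh (by omega) _ (hu i)
    have hTT : HasFDerivAt (fun w : κ → ℝ => fun i => T (w i))
        (ContinuousLinearMap.pi fun i => h (u i) •
          ContinuousLinearMap.proj (R := ℝ) (φ := fun _ : κ => ℝ) i) u := by
      rw [hasFDerivAt_pi]
      intro i
      have h1 : HasFDerivAt (fun w : κ → ℝ => w i)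
        (ContinuousLinearMap.proj (R := ℝ) (φ := fun _ : κ => ℝ) i) u :=
        (ContinuousLinearMap.proj (R := ℝ) (φ := fun _ : κ => ℝ) i).hasFDerivAt
      exact (hT (u i) (hu i)).comp_hasFDerivAt u h1
    have hA := ((hF l (by omega)) (fun i => T (u i))).hasFDerivAt.comp u hTT
    have hP := (differentiableAt_map_prod l hhl).hasFDerivAt
    have hP0 := pD_map_prod hnd'.1 hhl
    rw [pD] at hP0
    have hAP := hA.mul hP
    rw [List.foldr_cons, pD, hev.fderiv_eq]
    have e : (fun u : κ → ℝ => l.foldr pD F (fun i => T (u i)) * (l.map fun i => h (u i)).prod) =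
      ((l.foldr pD F ∘ fun w : κ → ℝ => fun i => T (w i)) *
        fun w : κ → ℝ => (l.map fun i => h (w i)).prod) := rfl
    have hdir : (ContinuousLinearMap.pi fun i => h (u i) •
          ContinuousLinearMap.proj (R := ℝ) (φ := fun _ : κ => ℝ) i) (Pi.single m (1 : ℝ)) =
        h (u m) • Pi.single m (1 : ℝ) := by
      ext i
      by_cases hi : i = m
      · subst hi; simp
      · simp [Pi.single_eq_of_ne hi]
    rw [e, hAP.fderiv, _root_.add_apply, _root_.smul_apply, _root_.smul_apply, hP0,
      ContinuousLinearMap.comp_apply, hdir, map_smul]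
    simp only [List.foldr_cons, List.map_cons, List.prod_cons, smul_eq_mul, pD]
    ring

end ChainRule

/-- `mD` of the indicator of `v` differentiates along a duplicate-free enumeration of `v`. -/
lemma indicator_list {κ : Type} [Fintype κ] [DecidableEq κ] (v : Finset κ) :
    ∃ l : List κ, l.Nodup ∧ l.toFinset = v ∧ l.length = v.card ∧
      ∀ F, mD (fun i => if i ∈ v then 1 else 0) F = l.foldr pD F := by
  have hcount := count_flatMap_replicate (fun i => if i ∈ v then 1 else 0)
  refine ⟨_, ?_, ?_, ?_, fun F => rfl⟩
  · rw [List.nodup_iff_count_le_one]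
    intro a
    rw [hcount]; split_ifs <;> simp
  · ext a
    rw [List.mem_toFinset, ← List.count_pos_iff, hcount]
    split_ifs with h <;> simp [h]
  · rw [← sum_count_eq_length, Finset.sum_congr rfl fun i _ => hcount i]
    simp

lemma mw_rpow_one_le {ρ : ℝ → ℝ} (hc : Continuous ρ) (hpos : ∀ t, 0 < ρ t) (hi : Integrable ρ)
    (h1 : ∫ t : ℝ, ρ t = 1) {b : ℝ} (hb : 0 ≤ b) (t : ℝ) : 1 ≤ mw ρ t ^ (-b) :=
  Real.one_le_rpow_of_pos_of_le_one_of_nonpos (mw_pos hc hpos hi h1 t) (mw_le_one hc hpos hi h1 t)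
    (by linarith)

/-- under Assumptions 1, 2, 3 with `r ≥ d−1` and `B_j < 1/(2d−1)`, the
function `q_j(u) = (P_j f)(Φ⁻¹(u))` satisfies the boundary growth condition on
`(0,1)^{d-1}` with rates `(2d−1)B_i + B`. -/
theorem stmt_11 {d r : ℕ} (hd : 1 ≤ d) (hr : 1 ≤ r) (j : Fin d)
    (g φ f : (Fin d → ℝ) → ℝ)
    (hg : ContDiff ℝ (r : ℕ∞) g) (hφ : ContDiff ℝ (r : ℕ∞) φ)
    (hf : ∀ x, f x = if 0 ≤ φ x then g x else 0)
    (ρ : ℝ → ℝ)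
    -- Assumption 1: `D_jφ` never vanishes
    (hDj : ∀ x : Fin d → ℝ, pD j φ x ≠ 0)
    -- Assumption 2: growth conditions with constants `L > 0`, `B_i ∈ (0,1)`
    (L : ℝ) (hL : 0 < L) (B : Fin d → ℝ) (hB : ∀ i, B i ∈ Ioo (0 : ℝ) 1)
    (hgrowth_g : ∀ α : Fin d → ℕ, (∑ i, α i) ≤ r → ∀ x, |mD α g x| ≤
      L * ∏ i, min (cdf ρ (x i)) (1 - cdf ρ (x i)) ^ (-(B i)))
    (hgrowth_φ : ∀ α : Fin d → ℕ, (∑ i, α i) ≤ r → ∀ x, |mD α φ x| ≤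
      L * ∏ i, min (cdf ρ (x i)) (1 - cdf ρ (x i)) ^ (-(B i)))
    (hgrowth_Dj : ∀ b : ℕ, 1 ≤ b → b ≤ 2 * r - 1 → ∀ x, |pD j φ x| ^ (-(b : ℝ)) ≤
      L * ∏ i, min (cdf ρ (x i)) (1 - cdf ρ (x i)) ^ (-(B i)))
    -- Assumption 3: `ρ ∈ C^{r-1}` strictly positive probability density with a
    -- quantile-derivative bound and tail conditions
    (hρsmooth : ContDiff ℝ ((r - 1 : ℕ) : ℕ∞) ρ)
    (hρpos : ∀ t, 0 < ρ t) (hρint : Integrable ρ) (hρprob : ∫ t : ℝ, ρ t = 1)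
    (Finv : ℝ → ℝ) (hFinv : ∀ u ∈ Ioo (0 : ℝ) 1, cdf ρ (Finv u) = u)
    (B' L' : ℝ) (hB' : 0 < B') (hL' : 0 < L')
    (hquant : ∀ u ∈ Ioo (0 : ℝ) 1, 1 / ρ (Finv u) ≤ L' * min u (1 - u) ^ (-1 - B'))
    (htail_top : ∀ c : ℕ, c ≤ r - 1 → ∀ a ∈ Ioo (0 : ℝ) 1,
      Tendsto (fun x => iteratedDeriv c ρ x / (1 - cdf ρ x) ^ a) atTop (nhds 0))
    (htail_bot : ∀ c : ℕ, c ≤ r - 1 → ∀ a ∈ Ioo (0 : ℝ) 1,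
      Tendsto (fun x => iteratedDeriv c ρ x / (cdf ρ x) ^ a) atBot (nhds 0))
    -- the additional conditions `r ≥ d−1` and `B_j < 1/(2d−1)`
    (hrd : d - 1 ≤ r) (hBj : B j < 1 / (2 * d - 1)) :
    ∃ C : ℝ, ∀ v : Finset {i : Fin d // i ≠ j}, ∀ u : {i : Fin d // i ≠ j} → ℝ,
      (∀ i, u i ∈ Ioo (0 : ℝ) 1) →
      |mD (fun i => if i ∈ v then 1 else 0)
          (fun w : {i : Fin d // i ≠ j} → ℝ => Pj j ρ f (fun i => Finv (w i))) u| ≤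
        C * (∏ i ∈ v, min (u i) (1 - u i) ^ (-(2 * (d : ℝ) - 1) * B i.1 - 1 - B')) *
          ∏ i ∈ vᶜ, min (u i) (1 - u i) ^ (-(2 * (d : ℝ) - 1) * B i.1) := by
  have hc : Continuous ρ := hρsmooth.continuous
  have hNcast : ((2 * d - 1 : ℕ) : ℝ) = 2 * (d : ℝ) - 1 := by
    rw [Nat.cast_sub (by omega)]; push_cast; ring
  have hN : (0 : ℝ) < 2 * (d : ℝ) - 1 := by
    rw [← hNcast]; exact_mod_cast (by omega : 0 < 2 * d - 1)
  have hmw := mw_pos hc hρpos hρint hρprob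
  have hmw1 := fun i t => mw_rpow_one_le hc hρpos hρint hρprob (hB i).1.le t
  have hpow : ∀ (b t : ℝ), (mw ρ t ^ (-b)) ^ (2 * d - 1) = mw ρ t ^ (-((2 * (d : ℝ) - 1) * b)) := by
    intro b t
    rw [← Real.rpow_natCast, ← Real.rpow_mul (hmw t).le, hNcast]
    congr 1; ring
  obtain ⟨s, hs1, hs⟩ := exists_sign (contDiff_one_of_nat hφ hr) hDj
  have S : GrowthData r j g φ ρ s L (fun t => mw ρ t ^ (-(B j)))
      (fun y => ∏ k : {i : Fin d // i ≠ j}, mw ρ (y k) ^ (-(B k.1)))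
      (fun x => ∏ i, mw ρ (x i) ^ (-(B i))) :=
    { one_le_r := hr
      le_r := hrd
      hg := hg
      hφ := hφ
      hρ := hρsmooth
      ρ_nonneg := fun t => (hρpos t).le
      s_eq := hs1
      s_pos := hs
      L_pos := hL
      a_cont := mw_rpow_continuous hc hρpos hρint hρprob _
      β_cont := continuous_finsetProd _ fun k _ =>
        (mw_rpow_continuous hc hρpos hρint hρprob _).comp (continuous_apply k)
      one_le_a := hmw1 j
      one_le_β := fun y => by
        rw [← Finset.prod_const_one (ι := {i : Fin d // i ≠ j}) (s := Finset.univ)]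
        exact Finset.prod_le_prod (fun _ _ => zero_le_one) fun k _ => hmw1 k.1 _
      W_eq := fun t y => by
        rw [Fintype.prod_eq_mul_prod_subtype_ne _ j, insj_self]
        simp only [insj_val]
      bg := fun l hl x => by
        rw [foldr_pD_eq_mD hg l hl]
        exact hgrowth_g _ (by rwa [sum_count_eq_length]) x
      bφ := fun l hl x => by
        rw [foldr_pD_eq_mD hφ l hl]
        exact hgrowth_φ _ (by rwa [sum_count_eq_length]) x
      bD := fun b hb hb' x => by
        have := hgrowth_Dj b hb hb' x
        rwa [Real.rpow_neg (abs_nonneg _), Real.rpow_natCast, ← inv_pow] at this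
      aρ_int := mw_integrable hc hρpos hρint hρprob (hB j).2
      tail := fun c hcr => by
        simp only [hpow]
        have ha : (2 * (d : ℝ) - 1) * B j ∈ Ioo (0 : ℝ) 1 := by
          refine ⟨mul_pos hN (hB j).1, ?_⟩
          rwa [lt_div_iff₀ hN, mul_comm] at hBj
        exact mw_tail hc hρpos hρint hρprob (htail_top c hcr _ ha) (htail_bot c hcr _ ha) }
  have hPj : Pj j ρ f = vol j φ ρ g := by
    funext y; simp only [Pj, vol, hf]
  have hcard : ∀ v : Finset {i : Fin d // i ≠ j}, v.card + 1 ≤ d := by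
    intro v
    have h1 := v.card_le_univ
    have h2 : Fintype.card {i : Fin d // i ≠ j} = d - 1 := by simp
    omega
  choose l hnd hset hlen hmD using fun v : Finset {i : Fin d // i ≠ j} => indicator_list v
  choose C hC hbound using fun v => S.iterated_bound (l v) (by rw [hlen]; exact hcard v)
  have hquantD : ∀ t ∈ Ioo (0 : ℝ) 1, HasDerivAt Finv (1 / ρ (Finv t)) t := fun t ht =>
    quantile_hasDerivAt hc hρpos hρint hFinv ht
  refine ⟨∑ v, C v * L' ^ v.card, fun v u hu => ?_⟩
  -- `1 / ρ ∘ Φ⁻¹` is differentiated only if `d - 1 ≥ 2`, and then `r ≥ 2` makes `ρ` differentiable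
  have hchain := foldr_pD_comp (K := d - 1) hquantD
    (fun l hl => S.iterated_differentiable l (by omega))
    (fun hK t ht => by
      have hρd : Differentiable ℝ ρ := hρsmooth.differentiable (by
        have : r - 1 ≠ 0 := by omega
        exact_mod_cast this)
      exact (differentiableAt_const _).div
        ((hρd _).comp t (hquantD t ht).differentiableAt) (hρpos _).ne')
    (l v) (hnd v) (by rw [hlen]; have := hcard v; omega) u hu
  rw [hmD, hPj, hchain, ← List.prod_toFinset _ (hnd v), hset, abs_mul]
  have hmin : ∀ i, 0 < min (u i) (1 - u i) := fun i =>
    lt_min (hu i).1 (by linarith [(hu i).2])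
  have hmwu : ∀ i, mw ρ (Finv (u i)) = min (u i) (1 - u i) := fun i => by
    rw [mw, hFinv _ (hu i)]
  have hb1 : |(l v).foldr pD (vol j φ ρ g) fun i => Finv (u i)| ≤
      C v * ((∏ i ∈ v, min (u i) (1 - u i) ^ (-(2 * (d : ℝ) - 1) * B i.1)) *
        ∏ i ∈ vᶜ, min (u i) (1 - u i) ^ (-(2 * (d : ℝ) - 1) * B i.1)) := by
    refine (hbound v _).trans (le_of_eq ?_)
    rw [← Finset.prod_pow, Finset.prod_mul_prod_compl]
    congr 1
    refine Finset.prod_congr rfl fun i _ => ?_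
    rw [hpow, hmwu, neg_mul]
  have hb2 : |∏ i ∈ v, 1 / ρ (Finv (u i))| ≤
      L' ^ v.card * ∏ i ∈ v, min (u i) (1 - u i) ^ (-1 - B') := by
    rw [Finset.abs_prod, ← Finset.prod_const, ← Finset.prod_mul_distrib]
    refine Finset.prod_le_prod (fun _ _ => abs_nonneg _) fun i _ => ?_
    rw [abs_of_pos (one_div_pos.2 (hρpos _))]
    exact hquant _ (hu i)
  have hnn : ∀ (s : Finset {i : Fin d // i ≠ j}) (e : {i : Fin d // i ≠ j} → ℝ),
      0 ≤ ∏ i ∈ s, min (u i) (1 - u i) ^ e i := fun s e =>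
    Finset.prod_nonneg fun i _ => (Real.rpow_pos_of_pos (hmin i) _).le
  have hsplit : (∏ i ∈ v, min (u i) (1 - u i) ^ (-(2 * (d : ℝ) - 1) * B i.1)) *
      ∏ i ∈ v, min (u i) (1 - u i) ^ (-1 - B') =
      ∏ i ∈ v, min (u i) (1 - u i) ^ (-(2 * (d : ℝ) - 1) * B i.1 - 1 - B') := by
    rw [← Finset.prod_mul_distrib]
    refine Finset.prod_congr rfl fun i _ => ?_
    rw [← Real.rpow_add (hmin i)]
    congr 1; ring
  calc _ ≤ (C v * ((∏ i ∈ v, min (u i) (1 - u i) ^ (-(2 * (d : ℝ) - 1) * B i.1)) *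
        ∏ i ∈ vᶜ, min (u i) (1 - u i) ^ (-(2 * (d : ℝ) - 1) * B i.1))) *
        (L' ^ v.card * ∏ i ∈ v, min (u i) (1 - u i) ^ (-1 - B')) :=
        mul_le_mul hb1 hb2 (abs_nonneg _)
          (mul_nonneg (hC v) (mul_nonneg (hnn v _) (hnn vᶜ _)))
    _ = (C v * L' ^ v.card) *
        (∏ i ∈ v, min (u i) (1 - u i) ^ (-(2 * (d : ℝ) - 1) * B i.1 - 1 - B')) *
        ∏ i ∈ vᶜ, min (u i) (1 - u i) ^ (-(2 * (d : ℝ) - 1) * B i.1) := by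
        rw [← hsplit]; ring
    _ ≤ _ := by
        have : C v * L' ^ v.card ≤ ∑ v, C v * L' ^ v.card :=
          Finset.single_le_sum (f := fun v : Finset {i : Fin d // i ≠ j} => C v * L' ^ v.card)
            (fun v _ => mul_nonneg (hC v) (pow_nonneg hL'.le _)) (Finset.mem_univ v)
        exact mul_le_mul_of_nonneg_right (mul_le_mul_of_nonneg_right this (hnn v _)) (hnn vᶜ _)
end

section
/- In the Black–Scholes Asian setting, suppose the j-th column of the generating matrix satisfies a_{ij} ≥ 0 for all i ∈ {1,…,d} and a_{i*j} > 0 for some i* (as holds since A is nonsingular). Then for every b > 0 and every B > 0 there exists a constant C < ∞ such that |(D_jφ)(x)|^{−b} ≤ C·∏_{i=1}^d min(Φ(x_i), 1−Φ(x_i))^{−B} for all x ∈ ℝ^d, where (D_jφ)(x) = (σ/d)·Σ_{i=1}^d a_{ij} S_i(x) and Φ is the standard normal CDF. -/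
/-!
Since the `j`-th column of `A` is nonnegative, the sum defining `D_jφ(x)` is at least its `i₀`-th
term, which is `c * exp (σ * ∑ k, A i₀ k * x k)` for a constant `c > 0`. Hence
`|D_jφ(x)| ^ (-b)` is at most a constant times a product of factors `exp (γ_k * x k)`. The tails of
the normal distribution decay faster than any exponential: the Chernoff bound gives
`min (Φ x) (1 - Φ x) ≤ M * exp (-l * x)` for every real `l`, where `M` is the moment generating
function of the normal law at `l` (`min_cdf_le`). Raising this to the power `-B` with `l = γ / B`
bounds each factor `exp (γ * x)` by a multiple of `min (Φ x) (1 - Φ x) ^ (-B)` (`exp_le_min_rpow`).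
-/

open MeasureTheory Set Filter

/-- The standard normal density. -/
noncomputable def stdNormalPdf : ℝ → ℝ :=
  fun x => (Real.sqrt (2 * Real.pi))⁻¹ * Real.exp (-x ^ 2 / 2)

/-- The standard normal CDF. -/
noncomputable def stdNormalCdf : ℝ → ℝ := fun x => ∫ t in Iic x, stdNormalPdf t

/-- The simulated asset price `S_i(x) = S_0·exp[(μ − σ²/2)·t_i + σ·Σ_k a_{ik} x_k]`
at time `t_i = i·Δt` (with `i = 1,…,d`). -/
noncomputable def Sprice (d : ℕ) (S0 σ μ Δt : ℝ) (A : Matrix (Fin d) (Fin d) ℝ)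
    (i : Fin d) (x : Fin d → ℝ) : ℝ :=
  S0 * Real.exp ((μ - σ ^ 2 / 2) * ((i : ℕ) + 1) * Δt + σ * ∑ k, A i k * x k)

lemma stdNormalPdf_eq_gaussianPDFReal : stdNormalPdf = ProbabilityTheory.gaussianPDFReal 0 1 := by
  funext x
  simp [stdNormalPdf, ProbabilityTheory.gaussianPDFReal]

lemma stdNormalPdf_pos (x : ℝ) : 0 < stdNormalPdf x := by
  unfold stdNormalPdf
  positivity

lemma integrable_stdNormalPdf : Integrable stdNormalPdf := by
  rw [stdNormalPdf_eq_gaussianPDFReal]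
  exact ProbabilityTheory.integrable_gaussianPDFReal 0 1

lemma integrable_exp_mul_stdNormalPdf (l : ℝ) :
    Integrable (fun t => Real.exp (l * t) * stdNormalPdf t) := by
  -- Completing the square: the integrand is a multiple of the density shifted by `l`.
  have h := (integrable_stdNormalPdf.comp_sub_right l).const_mul (Real.exp (l ^ 2 / 2))
  refine h.congr (Eventually.of_forall fun t => ?_)
  simp only [stdNormalPdf]
  rw [mul_left_comm, mul_left_comm (Real.exp (l * t)), ← Real.exp_add, ← Real.exp_add]
  congr 2
  ring

lemma one_sub_stdNormalCdf (x : ℝ) : 1 - stdNormalCdf x = ∫ t in Ioi x, stdNormalPdf t := by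
  have h1 : ∫ t, stdNormalPdf t = 1 := by
    rw [stdNormalPdf_eq_gaussianPDFReal]
    exact ProbabilityTheory.integral_gaussianPDFReal_eq_one 0 one_ne_zero
  have h2 := intervalIntegral.integral_Iic_add_Ioi (b := x)
    integrable_stdNormalPdf.integrableOn integrable_stdNormalPdf.integrableOn
  rw [h1] at h2
  unfold stdNormalCdf
  linarith

lemma setIntegral_stdNormalPdf_pos {s : Set ℝ} (hs : volume s ≠ 0) :
    0 < ∫ t in s, stdNormalPdf t := by
  rw [setIntegral_pos_iff_support_of_nonneg_ae
    (Eventually.of_forall fun t => (stdNormalPdf_pos t).le) integrable_stdNormalPdf.integrableOn]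
  have : Function.support stdNormalPdf = univ :=
    eq_univ_of_forall fun t => (stdNormalPdf_pos t).ne'
  rw [this, univ_inter]
  exact pos_iff_ne_zero.mpr hs

lemma min_cdf_pos (x : ℝ) : 0 < min (stdNormalCdf x) (1 - stdNormalCdf x) := by
  rw [one_sub_stdNormalCdf]
  exact lt_min (setIntegral_stdNormalPdf_pos (by simp)) (setIntegral_stdNormalPdf_pos (by simp))

/-- Chernoff's bound on a set where `exp (l * (t - x)) ≥ 1`. -/
lemma setIntegral_stdNormalPdf_le (l x : ℝ) {s : Set ℝ} (hs : MeasurableSet s)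
    (h : ∀ t ∈ s, 0 ≤ l * (t - x)) :
    ∫ t in s, stdNormalPdf t ≤
      (∫ t, Real.exp (l * t) * stdNormalPdf t) * Real.exp (-l * x) := by
  have hi := (integrable_exp_mul_stdNormalPdf l).mul_const (Real.exp (-l * x))
  rw [← integral_mul_const]
  calc ∫ t in s, stdNormalPdf t
      ≤ ∫ t in s, Real.exp (l * t) * stdNormalPdf t * Real.exp (-l * x) := by
        refine setIntegral_mono_on integrable_stdNormalPdf.integrableOn hi.integrableOn hs
          fun t ht => ?_
        rw [mul_right_comm, ← Real.exp_add]
        refine le_mul_of_one_le_left (stdNormalPdf_pos t).le (Real.one_le_exp ?_)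
        linarith [h t ht]
    _ ≤ _ := setIntegral_le_integral hi (Eventually.of_forall fun t => by
        have := stdNormalPdf_pos t
        positivity)

/-- The lower tail serves for `l ≤ 0`, the upper one for `l ≥ 0`. -/
lemma min_cdf_le (l x : ℝ) : min (stdNormalCdf x) (1 - stdNormalCdf x) ≤
    (∫ t, Real.exp (l * t) * stdNormalPdf t) * Real.exp (-l * x) := by
  rcases le_total l 0 with hl | hl
  · exact (min_le_left _ _).trans (setIntegral_stdNormalPdf_le l x measurableSet_Iic
      fun t ht => mul_nonneg_of_nonpos_of_nonpos hl (sub_nonpos.mpr ht))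
  · refine (min_le_right _ _).trans ?_
    rw [one_sub_stdNormalCdf]
    exact setIntegral_stdNormalPdf_le l x measurableSet_Ioi
      fun t ht => mul_nonneg hl (sub_nonneg.mpr (le_of_lt ht))

lemma exp_le_min_rpow (g B : ℝ) (hB : 0 < B) : ∃ C : ℝ, ∀ x : ℝ,
    Real.exp (g * x) ≤ C * min (stdNormalCdf x) (1 - stdNormalCdf x) ^ (-B) := by
  set M := ∫ t, Real.exp (g / B * t) * stdNormalPdf t with hM
  have hMpos : 0 < M :=
    pos_of_mul_pos_left ((min_cdf_pos 0).trans_le (min_cdf_le (g / B) 0)) (Real.exp_pos _).le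
  refine ⟨M ^ B, fun x => ?_⟩
  have h := Real.rpow_le_rpow_of_nonpos (min_cdf_pos x) (min_cdf_le (g / B) x)
    (neg_nonpos.mpr hB.le)
  rw [← hM, Real.mul_rpow hMpos.le (Real.exp_pos _).le, ← Real.exp_mul] at h
  calc Real.exp (g * x) = M ^ B * (M ^ (-B) * Real.exp (-(g / B) * x * -B)) := by
        rw [← mul_assoc, ← Real.rpow_add hMpos, add_neg_cancel, Real.rpow_zero, one_mul]
        congr 1
        field_simp
    _ ≤ _ := mul_le_mul_of_nonneg_left h (by positivity)

lemma hasFDerivAt_Sprice (d : ℕ) (S0 σ μ Δt : ℝ) (A : Matrix (Fin d) (Fin d) ℝ)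
    (i : Fin d) (x : Fin d → ℝ) :
    HasFDerivAt (Sprice d S0 σ μ Δt A i)
      ((σ * Sprice d S0 σ μ Δt A i x) •
        ∑ k, A i k • (ContinuousLinearMap.proj k : (Fin d → ℝ) →L[ℝ] ℝ)) x := by
  have hlin : HasFDerivAt (fun x : Fin d → ℝ => ∑ k, A i k * x k)
      (∑ k, A i k • (ContinuousLinearMap.proj k : (Fin d → ℝ) →L[ℝ] ℝ)) x :=
    HasFDerivAt.fun_sum fun k _ => (hasFDerivAt_apply k x).const_mul (A i k)
  have h := (((hlin.const_mul σ).const_add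
    ((μ - σ ^ 2 / 2) * ((i : ℕ) + 1) * Δt)).exp).const_mul S0
  refine h.congr_fderiv ?_
  rw [smul_smul, smul_smul]
  congr 1
  unfold Sprice
  ring

lemma Sprice_pos (d : ℕ) {S0 : ℝ} (hS0 : 0 < S0) (σ μ Δt : ℝ) (A : Matrix (Fin d) (Fin d) ℝ)
    (i : Fin d) (x : Fin d → ℝ) : 0 < Sprice d S0 σ μ Δt A i x := by
  unfold Sprice
  positivity

/-- in the Black–Scholes Asian setting, if the `j`-th column of the
generating matrix is nonnegative with a strictly positive entry, then for every
`b > 0` and `B > 0`, `|(D_jφ)(x)|^{−b} ≤ C·∏_i min(Φ(x_i), 1−Φ(x_i))^{−B}`, where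
`(D_jφ)(x) = (σ/d)·Σ_i a_{ij} S_i(x)` and `φ(x) = S_A(x) − K`. -/
theorem stmt_16 (d : ℕ) (hd : 1 ≤ d) (S0 σ T K μ : ℝ)
    (hS0 : 0 < S0) (hσ : 0 < σ) (hT : 0 < T) (hK : 0 < K)
    (A : Matrix (Fin d) (Fin d) ℝ)
    (hA : ∀ i k : Fin d, (A * A.transpose) i k = T / d * (↑(min (i : ℕ) (k : ℕ)) + 1))
    (j : Fin d) (hcol : ∀ i, 0 ≤ A i j) (i₀ : Fin d) (hi₀ : 0 < A i₀ j) :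
    -- `D_jφ` is given by the stated formula, for `φ(x) = S_A(x) − K` ...
    (∀ x : Fin d → ℝ,
      pD j (fun x => (1 / d) * ∑ i, Sprice d S0 σ μ (T / d) A i x - K) x =
        σ / d * ∑ i, A i j * Sprice d S0 σ μ (T / d) A i x) ∧
    -- ... and it satisfies the growth bound
    ∀ b > (0 : ℝ), ∀ B > (0 : ℝ), ∃ C : ℝ, ∀ x : Fin d → ℝ,
      |σ / d * ∑ i, A i j * Sprice d S0 σ μ (T / d) A i x| ^ (-b) ≤
        C * ∏ i, min (stdNormalCdf (x i)) (1 - stdNormalCdf (x i)) ^ (-B) := by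
  refine ⟨fun x => ?_, fun b hb B hB => ?_⟩
  · have h := ((HasFDerivAt.fun_sum (u := Finset.univ) fun i _ =>
      hasFDerivAt_Sprice d S0 σ μ (T / d) A i x).const_mul (1 / (d : ℝ))).sub_const K
    unfold pD
    rw [h.fderiv]
    simp only [smul_apply, sum_apply,
      ContinuousLinearMap.proj_apply,
      smul_eq_mul, Pi.single_apply, mul_ite, mul_one, mul_zero, Finset.sum_ite_eq',
      Finset.mem_univ, if_true, Finset.mul_sum]
    refine Finset.sum_congr rfl fun i _ => ?_
    simp
    ring
  · have hd' : (0 : ℝ) < d := by exact_mod_cast hd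
    choose C hC using fun k => exp_le_min_rpow (-(b * σ * A i₀ k)) B hB
    -- The `x`-independent factor of the `i₀`-th term.
    set c := σ / d * (A i₀ j * (S0 * Real.exp ((μ - σ ^ 2 / 2) * ((i₀ : ℕ) + 1) * (T / d)))) with hc
    have hcpos : 0 < c := by positivity
    refine ⟨c ^ (-b) * ∏ k, C k, fun x => ?_⟩
    have hlow : c * Real.exp (σ * ∑ k, A i₀ k * x k) ≤
        σ / d * ∑ i, A i j * Sprice d S0 σ μ (T / d) A i x := by
      calc c * Real.exp (σ * ∑ k, A i₀ k * x k)
          = σ / d * (A i₀ j * Sprice d S0 σ μ (T / d) A i₀ x) := by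
            rw [hc, Sprice, Real.exp_add]
            ring
        _ ≤ _ := by
            refine mul_le_mul_of_nonneg_left ?_ (by positivity)
            exact Finset.single_le_sum
              (f := fun i => A i j * Sprice d S0 σ μ (T / d) A i x)
              (fun i _ => mul_nonneg (hcol i) (Sprice_pos d hS0 σ μ _ A i x).le)
              (Finset.mem_univ i₀)
    calc |σ / d * ∑ i, A i j * Sprice d S0 σ μ (T / d) A i x| ^ (-b)
        ≤ (c * Real.exp (σ * ∑ k, A i₀ k * x k)) ^ (-b) :=
          Real.rpow_le_rpow_of_nonpos (by positivity) (hlow.trans (le_abs_self _)) (by linarith)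
      _ = c ^ (-b) * ∏ k, Real.exp (-(b * σ * A i₀ k) * x k) := by
          rw [Real.mul_rpow hcpos.le (Real.exp_pos _).le, ← Real.exp_mul, ← Real.exp_sum]
          congr 2
          rw [Finset.mul_sum, Finset.sum_mul]
          exact Finset.sum_congr rfl fun k _ => by ring
      _ ≤ c ^ (-b) * ∏ k, (C k * min (stdNormalCdf (x k)) (1 - stdNormalCdf (x k)) ^ (-B)) := by
          refine mul_le_mul_of_nonneg_left ?_ (by positivity)
          exact Finset.prod_le_prod (fun k _ => (Real.exp_pos _).le) fun k _ => hC k (x k)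
      _ = _ := by rw [Finset.prod_mul_distrib, mul_assoc]
end
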